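/- arXiv:0806.3984 — 2 statements merged into one kernel-verified Lean document; each statement's English description precedes it below -/
import Mathlib

section
/- Quantum Pinsker inequality: for density operators ρ, σ on a finite-dimensional Hilbert space, (Tr|ρ − σ|)² ≤ 4 S(ρ‖σ), where S is the relative entropy in base 2 (equivalently, ‖ρ−σ‖₁² ≤ (2 ln 2) S_nat with natural-log relative entropy, which implies the stated base-2 bound). -/
open Matrix Kronecker ComplexOrder

noncomputable section

/-- ω = e^{2πi/d} -/
noncomputable def qomega (d : ℕ) : ℂ := Complex.exp (2 * Real.pi * Complex.I / d)

/-- Generalized Pauli Z: Z|k⟩ = ω^k |k⟩. -/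
noncomputable def pauliZ (d : ℕ) : Matrix (Fin d) (Fin d) ℂ :=
  Matrix.diagonal fun k : Fin d => qomega d ^ (k : ℕ)

/-- Generalized Pauli X: X|k⟩ = |k+1 mod d⟩. -/
noncomputable def pauliX (d : ℕ) [NeZero d] : Matrix (Fin d) (Fin d) ℂ :=
  Matrix.of fun i j : Fin d => if i = j + 1 then 1 else 0

/-- Fourier matrix: column j is |x̃_j⟩ = (1/√d) Σ_k ω^{jk} |k⟩. -/
noncomputable def fourierMat (d : ℕ) : Matrix (Fin d) (Fin d) ℂ :=
  Matrix.of fun k j : Fin d => qomega d ^ ((j : ℕ) * (k : ℕ)) / (Real.sqrt d : ℂ)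

/-- density operator predicate -/
def IsDensity {n : Type*} [Fintype n] (ρ : Matrix n n ℂ) : Prop :=
  ρ.PosSemidef ∧ ρ.trace = 1

/-- von Neumann entropy in base 2, via eigenvalues. -/
noncomputable def vN {n : Type*} [Fintype n] [DecidableEq n] (ρ : Matrix n n ℂ) : ℝ :=
  if h : ρ.IsHermitian then ∑ i, -(h.eigenvalues i * Real.logb 2 (h.eigenvalues i)) else 0

/-- complete dephasing in the standard basis -/
def dephase {n : Type*} [DecidableEq n] (M : Matrix n n ℂ) : Matrix n n ℂ :=
  Matrix.of fun i j => if i = j then M i j else 0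

/-- dephasing of the first (A) factor of a bipartite state, standard (Z eigen-) basis -/
def dephaseA {a b : Type*} [DecidableEq a] (M : Matrix (a × b) (a × b) ℂ) :
    Matrix (a × b) (a × b) ℂ :=
  Matrix.of fun p q => if p.1 = q.1 then M p q else 0

/-- dephasing of the first (A) factor in the Fourier (X eigen-) basis -/
noncomputable def dephaseXA (d : ℕ) {b : Type*} [Fintype b] [DecidableEq b]
    (M : Matrix (Fin d × b) (Fin d × b) ℂ) : Matrix (Fin d × b) (Fin d × b) ℂ :=
  (fourierMat d ⊗ₖ (1 : Matrix b b ℂ)) *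
    dephaseA ((fourierMat d ⊗ₖ (1 : Matrix b b ℂ))ᴴ * M * (fourierMat d ⊗ₖ (1 : Matrix b b ℂ))) *
    (fourierMat d ⊗ₖ (1 : Matrix b b ℂ))ᴴ

/-- reduced state on A of a bipartite state -/
def r2A {a b : Type*} [Fintype b] (M : Matrix (a × b) (a × b) ℂ) : Matrix a a ℂ :=
  Matrix.of fun i j => ∑ y : b, M (i, y) (j, y)

/-- reduced state on B of a bipartite state -/
def r2B {a b : Type*} [Fintype a] (M : Matrix (a × b) (a × b) ℂ) : Matrix b b ℂ :=
  Matrix.of fun i j => ∑ x : a, M (x, i) (x, j)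

/-- reduced state on AB of a tripartite state on A ⊗ B ⊗ E -/
def rAB {a b e : Type*} [Fintype e] (M : Matrix (a × b × e) (a × b × e) ℂ) :
    Matrix (a × b) (a × b) ℂ :=
  Matrix.of fun p q => ∑ x : e, M (p.1, p.2, x) (q.1, q.2, x)

/-- reduced state on AE of a tripartite state -/
def rAE {a b e : Type*} [Fintype b] (M : Matrix (a × b × e) (a × b × e) ℂ) :
    Matrix (a × e) (a × e) ℂ :=
  Matrix.of fun p q => ∑ y : b, M (p.1, y, p.2) (q.1, y, q.2)

/-- reduced state on A of a tripartite state -/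
def rA {a b e : Type*} [Fintype b] [Fintype e] (M : Matrix (a × b × e) (a × b × e) ℂ) :
    Matrix a a ℂ :=
  Matrix.of fun i j => ∑ y : b, ∑ x : e, M (i, y, x) (j, y, x)

/-- reduced state on B of a tripartite state -/
def rB {a b e : Type*} [Fintype a] [Fintype e] (M : Matrix (a × b × e) (a × b × e) ℂ) :
    Matrix b b ℂ :=
  Matrix.of fun i j => ∑ x : a, ∑ z : e, M (x, i, z) (x, j, z)

/-- reduced state on E of a tripartite state -/
def rE {a b e : Type*} [Fintype a] [Fintype b] (M : Matrix (a × b × e) (a × b × e) ℂ) :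
    Matrix e e ℂ :=
  Matrix.of fun i j => ∑ x : a, ∑ y : b, M (x, y, i) (x, y, j)

/-- matrix logarithm (base 2) of a Hermitian matrix via spectral decomposition -/
noncomputable def mlog {n : Type*} [Fintype n] [DecidableEq n] (M : Matrix n n ℂ) :
    Matrix n n ℂ :=
  if h : M.IsHermitian then
    (h.eigenvectorUnitary : Matrix n n ℂ) *
      Matrix.diagonal (fun i => (Real.logb 2 (h.eigenvalues i) : ℂ)) *
      (h.eigenvectorUnitary : Matrix n n ℂ)ᴴ
  else 0

/-- quantum relative entropy S(ρ‖σ) = Tr[ρ(log₂ρ − log₂σ)] -/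
noncomputable def relEnt {n : Type*} [Fintype n] [DecidableEq n] (ρ σ : Matrix n n ℂ) : ℝ :=
  ((ρ * (mlog ρ - mlog σ)).trace).re

/-- trace norm of a Hermitian matrix -/
noncomputable def traceNorm {n : Type*} [Fintype n] [DecidableEq n] (M : Matrix n n ℂ) : ℝ :=
  if h : M.IsHermitian then ∑ i, |h.eigenvalues i| else 0

/-!
Put `A = √ρ` and `B = √σ`. Since `ρ - σ` is the Hermitian part of `(A - B)(A + B)ᴴ`, Cauchy–Schwarz
gives `‖ρ - σ‖₁ ≤ ‖A - B‖₂ ‖A + B‖₂` in terms of Frobenius norms, and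
`‖A + B‖₂² ≤ 2 (Tr ρ + Tr σ)`. If `ρ` and `σ` have eigenvalues `pᵢ`, `qⱼ` and `cᵢⱼ` is the squared
overlap of the corresponding eigenvectors, then `‖A - B‖₂² = ∑ (√pᵢ - √qⱼ)² cᵢⱼ`. Each summand is
at most `(pᵢ (ln pᵢ - ln qⱼ) - pᵢ + qⱼ) cᵢⱼ` because `ln x ≤ x - 1` at `x = √(qⱼ / pᵢ)`, and these
bounds add up to `ln 2 · S(ρ‖σ) - Tr ρ + Tr σ`. For density matrices this proves the inequality with
`4 ln 2` in place of `4`.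
-/

lemma sq_sqrt_sub_sqrt_le {p q : ℝ} (hp : 0 ≤ p) (hq : 0 ≤ q) (h : q = 0 → p = 0) :
    (√p - √q) ^ 2 ≤ p * (Real.log p - Real.log q) - p + q := by
  rcases hp.eq_or_lt with rfl | hp'
  · simp [Real.sq_sqrt hq]
  have hq' : 0 < q := hq.lt_of_ne fun hq0 => hp'.ne' (h hq0.symm)
  have hlog : Real.log (√q / √p) ≤ √q / √p - 1 :=
    Real.log_le_sub_one_of_pos (by positivity)
  rw [Real.log_div (by positivity) (by positivity), Real.log_sqrt hp, Real.log_sqrt hq] at hlog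
  have hmul : p * (√q / √p) = √p * √q := by
    rw [mul_div_left_comm, Real.div_sqrt, mul_comm]
  have hscaled := mul_le_mul_of_nonneg_left hlog hp
  rw [sub_sq, Real.sq_sqrt hp, Real.sq_sqrt hq]
  linarith

lemma abs_norm_sq_sub_norm_sq_le (𝕜 : Type*) [RCLike 𝕜] {E : Type*} [SeminormedAddCommGroup E]
    [InnerProductSpace 𝕜 E] (x y : E) : |‖x‖ ^ 2 - ‖y‖ ^ 2| ≤ ‖x - y‖ * ‖x + y‖ := by
  have h : ‖x‖ ^ 2 - ‖y‖ ^ 2 = RCLike.re (inner 𝕜 (x - y) (x + y)) := by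
    simp only [inner_sub_left, inner_add_right, map_sub, map_add, inner_self_eq_norm_sq,
      inner_re_symm (𝕜 := 𝕜) y x]
    ring
  rw [h]
  exact (RCLike.abs_re_le_norm _).trans (norm_inner_le_norm _ _)

section Spectral

variable {n 𝕜 : Type*} [Fintype n] [DecidableEq n] [RCLike 𝕜] {A B : Matrix n n 𝕜}

lemma star_eigenvectorUnitary_mul_cfc (hA : A.IsHermitian) (f : ℝ → ℝ) :
    star (hA.eigenvectorUnitary : Matrix n n 𝕜) * cfc f A =
      diagonal (fun i => (f (hA.eigenvalues i) : 𝕜)) *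
        star (hA.eigenvectorUnitary : Matrix n n 𝕜) := by
  rw [hA.cfc_eq, IsHermitian.cfc, Unitary.conjStarAlgAut_apply, Matrix.mul_assoc,
    ← Matrix.mul_assoc, Unitary.coe_star_mul_self, Matrix.one_mul]
  rfl

lemma cfc_mul_eigenvectorUnitary (hA : A.IsHermitian) (f : ℝ → ℝ) :
    cfc f A * (hA.eigenvectorUnitary : Matrix n n 𝕜) =
      (hA.eigenvectorUnitary : Matrix n n 𝕜) *
        diagonal (fun i => (f (hA.eigenvalues i) : 𝕜)) := by
  rw [hA.cfc_eq, IsHermitian.cfc, Unitary.conjStarAlgAut_apply, Matrix.mul_assoc,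
    Unitary.coe_star_mul_self, Matrix.mul_one]
  rfl

/-- The overlap `|⟨uᵢ, vⱼ⟩|²` of the `i`-th eigenvector of `A` with the `j`-th eigenvector of `B`,
read off the change of basis between the two eigenbases chosen by Mathlib. It is the joint weight
that turns traces of functions of two noncommuting Hermitian matrices into classical double sums
over the two spectra. -/
def eigenOverlap (hA : A.IsHermitian) (hB : B.IsHermitian) (i j : n) : ℝ :=
  ‖(star (hA.eigenvectorUnitary : Matrix n n 𝕜) * (hB.eigenvectorUnitary : Matrix n n 𝕜)) i j‖ ^ 2

lemma eigenOverlap_nonneg (hA : A.IsHermitian) (hB : B.IsHermitian) (i j : n) :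
    0 ≤ eigenOverlap hA hB i j :=
  sq_nonneg _

lemma trace_cfc_mul_cfc (hA : A.IsHermitian) (hB : B.IsHermitian) (f g : ℝ → ℝ) :
    (cfc f A * cfc g B).trace = ((∑ i, ∑ j,
      f (hA.eigenvalues i) * g (hB.eigenvalues j) * eigenOverlap hA hB i j : ℝ) : 𝕜) := by
  set U : Matrix n n 𝕜 := (hA.eigenvectorUnitary : Matrix n n 𝕜) with hU
  set V : Matrix n n 𝕜 := (hB.eigenvectorUnitary : Matrix n n 𝕜) with hV
  set W := star U * V with hW
  have hUU : U * star U = 1 := Unitary.coe_mul_star_self _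
  have hVV : V * star V = 1 := Unitary.coe_mul_star_self _
  calc (cfc f A * cfc g B).trace
    _ = (star U * cfc f A * (cfc g B * V * star V) * U).trace := by
      rw [Matrix.mul_assoc (cfc g B), hVV, Matrix.mul_one, Matrix.mul_assoc (star U),
        Matrix.mul_assoc (star U), Matrix.trace_mul_comm (star U), Matrix.mul_assoc _ U, hUU,
        Matrix.mul_one]
    _ = ((diagonal (fun i => (f (hA.eigenvalues i) : 𝕜)) * W) *
          (diagonal (fun j => (g (hB.eigenvalues j) : 𝕜)) * star W)).trace := by
      rw [star_eigenvectorUnitary_mul_cfc, cfc_mul_eigenvectorUnitary]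
      simp only [hW, star_mul, star_star, Matrix.mul_assoc, ← hU, ← hV]
    _ = _ := by
      simp only [Matrix.trace, Matrix.diag, Matrix.mul_apply (M := _ * W), Matrix.diagonal_mul,
        star_apply, RCLike.star_def, eigenOverlap, ← hU, ← hV, ← hW]
      push_cast
      refine Finset.sum_congr rfl fun i _ => Finset.sum_congr rfl fun j _ => ?_
      rw [← RCLike.mul_conj]
      ring

lemma trace_cfc_left (hA : A.IsHermitian) (hB : B.IsHermitian) (f : ℝ → ℝ) :
    (cfc f A).trace =
      ((∑ i, ∑ j, f (hA.eigenvalues i) * eigenOverlap hA hB i j : ℝ) : 𝕜) := by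
  simpa only [cfc_const_one ℝ B hB.isSelfAdjoint, Matrix.mul_one, mul_one] using
    trace_cfc_mul_cfc hA hB f fun _ => 1

lemma trace_cfc_right (hA : A.IsHermitian) (hB : B.IsHermitian) (g : ℝ → ℝ) :
    (cfc g B).trace =
      ((∑ i, ∑ j, g (hB.eigenvalues j) * eigenOverlap hA hB i j : ℝ) : 𝕜) := by
  simpa only [cfc_const_one ℝ A hA.isSelfAdjoint, Matrix.one_mul, one_mul] using
    trace_cfc_mul_cfc hA hB (fun _ => 1) g

lemma eigenvalues_mul_eigenOverlap_eq_zero (hA : A.IsHermitian) (hB : B.IsHermitian)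
    (hker : ∀ v : n → 𝕜, B *ᵥ v = 0 → A *ᵥ v = 0) {j : n} (hj : hB.eigenvalues j = 0) (i : n) :
    hA.eigenvalues i * eigenOverlap hA hB i j = 0 := by
  have hAv : A *ᵥ ⇑(hB.eigenvectorBasis j) = 0 :=
    hker _ <| by rw [hB.mulVec_eigenvectorBasis, hj, zero_smul]
  have hUA := star_eigenvectorUnitary_mul_cfc hA id
  rw [cfc_id ℝ A hA.isSelfAdjoint] at hUA
  have hentry : (hA.eigenvalues i : 𝕜) * (star (hA.eigenvectorUnitary : Matrix n n 𝕜) *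
      (hB.eigenvectorUnitary : Matrix n n 𝕜)) i j = 0 := by
    have h := congrFun (congrArg (star (hA.eigenvectorUnitary : Matrix n n 𝕜) *ᵥ ·) hAv) i
    rwa [← hB.eigenvectorUnitary_mulVec, mulVec_zero, mulVec_mulVec, mulVec_mulVec, hUA,
      Matrix.mul_assoc, mulVec_single_one, col_apply, diagonal_mul] at h
  rcases mul_eq_zero.1 hentry with h | h
  · rw [RCLike.ofReal_eq_zero.1 h, zero_mul]
  · rw [eigenOverlap, h, norm_zero, zero_pow two_ne_zero, mul_zero]

lemma cfc_sqrt_mul_conjTranspose_self (hA : A.PosSemidef) :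
    cfc Real.sqrt A * (cfc Real.sqrt A)ᴴ = A := by
  have hcont : ContinuousOn Real.sqrt (spectrum ℝ A) := Real.continuous_sqrt.continuousOn
  have hspec : (spectrum ℝ A).EqOn (fun x => √x * √x) id := by
    rw [hA.isHermitian.spectrum_real_eq_range_eigenvalues]
    rintro - ⟨i, rfl⟩
    exact Real.mul_self_sqrt (hA.eigenvalues_nonneg i)
  rw [← star_eq_conjTranspose, (cfc_predicate Real.sqrt A).star_eq, ← cfc_mul _ _ A hcont hcont,
    cfc_congr hspec, cfc_id ℝ A hA.isHermitian.isSelfAdjoint]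

end Spectral

section Frobenius

open scoped Matrix.Norms.Frobenius

variable {m n 𝕜 : Type*} [Fintype m] [Fintype n] [RCLike 𝕜]

lemma frobenius_norm_sq (A : Matrix m n 𝕜) : ‖A‖ ^ 2 = ∑ i, ∑ j, ‖A i j‖ ^ 2 := by
  have hsum : 0 ≤ ∑ i, ∑ j, ‖A i j‖ ^ 2 := by positivity
  simp only [frobenius_norm_def, Real.rpow_two, ← Real.sqrt_eq_rpow, Real.sq_sqrt hsum]

lemma frobenius_norm_sq_eq_re_trace (A : Matrix m n 𝕜) :
    ‖A‖ ^ 2 = RCLike.re (A * Aᴴ).trace := by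
  simp only [frobenius_norm_sq, Matrix.trace, Matrix.diag_apply, Matrix.mul_apply,
    conjTranspose_apply, RCLike.star_def, RCLike.mul_conj, map_sum]
  norm_cast

lemma frobenius_norm_unitary_mul [DecidableEq m] {U : Matrix m m 𝕜} (hU : U ∈ unitaryGroup m 𝕜)
    (A : Matrix m n 𝕜) : ‖U * A‖ = ‖A‖ := by
  rw [← sq_eq_sq₀ (norm_nonneg _) (norm_nonneg _), frobenius_norm_sq_eq_re_trace,
    frobenius_norm_sq_eq_re_trace, conjTranspose_mul, Matrix.mul_assoc, Matrix.trace_mul_comm,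
    Matrix.mul_assoc, Matrix.mul_assoc, ← star_eq_conjTranspose U,
    mem_unitaryGroup_iff'.1 hU, Matrix.mul_one]

lemma frobenius_norm_mul_unitary [DecidableEq n] {U : Matrix n n 𝕜} (hU : U ∈ unitaryGroup n 𝕜)
    (A : Matrix m n 𝕜) : ‖A * U‖ = ‖A‖ := by
  rw [← frobenius_norm_conjTranspose, conjTranspose_mul, ← star_eq_conjTranspose U,
    frobenius_norm_unitary_mul (Unitary.star_mem hU), frobenius_norm_conjTranspose]

lemma frobenius_norm_sq_cfc_sub_cfc [DecidableEq n] {A B : Matrix n n 𝕜} (hA : A.IsHermitian)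
    (hB : B.IsHermitian) (f g : ℝ → ℝ) :
    ‖cfc f A - cfc g B‖ ^ 2 =
      ∑ i, ∑ j, (f (hA.eigenvalues i) - g (hB.eigenvalues j)) ^ 2 * eigenOverlap hA hB i j := by
  set U : Matrix n n 𝕜 := (hA.eigenvectorUnitary : Matrix n n 𝕜)
  set V : Matrix n n 𝕜 := (hB.eigenvectorUnitary : Matrix n n 𝕜)
  have hconj : star U * (cfc f A - cfc g B) * V =
      diagonal (fun i => (f (hA.eigenvalues i) : 𝕜)) * (star U * V) -
        star U * V * diagonal (fun j => (g (hB.eigenvalues j) : 𝕜)) := by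
    rw [Matrix.mul_sub, Matrix.sub_mul, star_eigenvectorUnitary_mul_cfc, Matrix.mul_assoc,
      Matrix.mul_assoc, cfc_mul_eigenvectorUnitary, Matrix.mul_assoc (star U)]
  have hentry (i j : n) : ‖(star U * (cfc f A - cfc g B) * V) i j‖ ^ 2 =
      (f (hA.eigenvalues i) - g (hB.eigenvalues j)) ^ 2 * eigenOverlap hA hB i j := by
    rw [hconj, Matrix.sub_apply, diagonal_mul, mul_diagonal, mul_comm _ (g _ : 𝕜), ← sub_mul,
      ← RCLike.ofReal_sub, norm_mul, mul_pow, RCLike.norm_ofReal, sq_abs, eigenOverlap]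
  calc ‖cfc f A - cfc g B‖ ^ 2
    _ = ‖star U * (cfc f A - cfc g B) * V‖ ^ 2 := by
      rw [frobenius_norm_mul_unitary hB.eigenvectorUnitary.2,
        frobenius_norm_unitary_mul (Unitary.star_mem hA.eigenvectorUnitary.2)]
    _ = _ := by simp only [frobenius_norm_sq, hentry]

lemma frobenius_norm_sq_cfc_sqrt [DecidableEq n] {A : Matrix n n 𝕜} (hA : A.PosSemidef) :
    ‖cfc Real.sqrt A‖ ^ 2 = RCLike.re A.trace := by
  rw [frobenius_norm_sq_eq_re_trace, cfc_sqrt_mul_conjTranspose_self hA]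

lemma sum_norm_mul_norm_le_frobenius_norm_mul (A B : Matrix m n 𝕜) :
    ∑ i, ∑ j, ‖A i j‖ * ‖B i j‖ ≤ ‖A‖ * ‖B‖ := by
  rw [← Real.sqrt_sq (norm_nonneg A), ← Real.sqrt_sq (norm_nonneg B), frobenius_norm_sq,
    frobenius_norm_sq, ← Fintype.sum_prod_type' fun i j => ‖A i j‖ * ‖B i j‖,
    ← Fintype.sum_prod_type' fun i j => ‖A i j‖ ^ 2,
    ← Fintype.sum_prod_type' fun i j => ‖B i j‖ ^ 2]
  exact Real.sum_mul_le_sqrt_mul_sqrt _ _ _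

lemma sum_abs_re_mul_conjTranspose_sub_diag_le (A B : Matrix m n 𝕜) :
    ∑ k, |RCLike.re ((A * Aᴴ - B * Bᴴ) k k)| ≤ ‖A - B‖ * ‖A + B‖ := by
  have hdiag (C : Matrix m n 𝕜) (k : m) : RCLike.re ((C * Cᴴ) k k) = ∑ j, ‖C k j‖ ^ 2 := by
    simp only [Matrix.mul_apply, conjTranspose_apply, RCLike.star_def, RCLike.mul_conj, map_sum]
    norm_cast
  calc ∑ k, |RCLike.re ((A * Aᴴ - B * Bᴴ) k k)|
    _ = ∑ k, |∑ j, (‖A k j‖ ^ 2 - ‖B k j‖ ^ 2)| := by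
      simp only [Matrix.sub_apply, map_sub, hdiag, Finset.sum_sub_distrib]
    _ ≤ ∑ k, ∑ j, ‖(A - B) k j‖ * ‖(A + B) k j‖ :=
      Finset.sum_le_sum fun k _ => (Finset.abs_sum_le_sum_abs _ _).trans <|
        Finset.sum_le_sum fun j _ => abs_norm_sq_sub_norm_sq_le 𝕜 (A k j) (B k j)
    _ ≤ ‖A - B‖ * ‖A + B‖ := sum_norm_mul_norm_le_frobenius_norm_mul _ _

end Frobenius

section TraceNorm

open scoped Matrix.Norms.Frobenius

variable {m n : Type*} [Fintype m] [Fintype n] [DecidableEq n]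

lemma traceNorm_nonneg (M : Matrix n n ℂ) : 0 ≤ traceNorm M := by
  unfold traceNorm
  split_ifs <;> positivity

lemma traceNorm_eq_sum_abs_re_diag {M : Matrix n n ℂ} (hM : M.IsHermitian) :
    traceNorm M = ∑ k, |((star (hM.eigenvectorUnitary : Matrix n n ℂ) * M *
      (hM.eigenvectorUnitary : Matrix n n ℂ)) k k).re| := by
  have hdiag := hM.conjStarAlgAut_star_eigenvectorUnitary
  rw [Unitary.conjStarAlgAut_star_apply] at hdiag
  simp [traceNorm, hM, hdiag]

lemma traceNorm_mul_conjTranspose_sub_le (A B : Matrix n m ℂ) :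
    traceNorm (A * Aᴴ - B * Bᴴ) ≤ ‖A - B‖ * ‖A + B‖ := by
  have hM : (A * Aᴴ - B * Bᴴ).IsHermitian :=
    (isHermitian_mul_conjTranspose_self A).sub (isHermitian_mul_conjTranspose_self B)
  set X := star (hM.eigenvectorUnitary : Matrix n n ℂ) with hX
  have hXU : X ∈ unitaryGroup n ℂ := Unitary.star_mem hM.eigenvectorUnitary.2
  have hconj : X * (A * Aᴴ - B * Bᴴ) * (hM.eigenvectorUnitary : Matrix n n ℂ) =
      X * A * (X * A)ᴴ - X * B * (X * B)ᴴ := by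
    simp only [conjTranspose_mul, hX, star_eq_conjTranspose, conjTranspose_conjTranspose,
      Matrix.mul_sub, Matrix.sub_mul, Matrix.mul_assoc]
  have hbound := sum_abs_re_mul_conjTranspose_sub_diag_le (X * A) (X * B)
  rw [← Matrix.mul_sub, ← Matrix.mul_add, frobenius_norm_unitary_mul hXU,
    frobenius_norm_unitary_mul hXU, ← hconj] at hbound
  rwa [traceNorm_eq_sum_abs_re_diag hM]

end TraceNorm

section RelativeEntropy

open scoped Matrix.Norms.Frobenius

variable {n : Type*} [Fintype n] [DecidableEq n] {ρ σ : Matrix n n ℂ}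

lemma mlog_eq_cfc (hρ : ρ.IsHermitian) : mlog ρ = cfc (Real.logb 2) ρ := by
  rw [mlog, dif_pos hρ, hρ.cfc_eq, IsHermitian.cfc, Unitary.conjStarAlgAut_apply]
  rfl

lemma relEnt_eq_sum (hρ : ρ.IsHermitian) (hσ : σ.IsHermitian) :
    relEnt ρ σ = ∑ i, ∑ j, hρ.eigenvalues i *
      (Real.logb 2 (hρ.eigenvalues i) - Real.logb 2 (hσ.eigenvalues j)) *
        eigenOverlap hρ hσ i j := by
  have hself : ρ * mlog ρ = cfc (fun x => x * Real.logb 2 x) ρ := by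
    rw [cfc_mul (fun x => x) _ ρ continuousOn_id (finite_real_spectrum.continuousOn _),
      cfc_id' ℝ ρ hρ.isSelfAdjoint, mlog_eq_cfc hρ]
  have hcross : ρ * mlog σ = cfc (fun x : ℝ => x) ρ * cfc (Real.logb 2) σ := by
    rw [cfc_id' ℝ ρ hρ.isSelfAdjoint, mlog_eq_cfc hσ]
  rw [relEnt, Matrix.mul_sub, hself, hcross, trace_sub, trace_cfc_left hρ hσ,
    trace_cfc_mul_cfc hρ hσ, ← RCLike.ofReal_sub]
  simp only [RCLike.ofReal_eq_complex_ofReal, Complex.ofReal_re, ← Finset.sum_sub_distrib, mul_sub,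
    sub_mul]

lemma frobenius_norm_sq_sqrt_sub_sqrt_le (hρ : ρ.PosSemidef) (hσ : σ.PosSemidef)
    (hsupp : ∀ v : n → ℂ, σ *ᵥ v = 0 → ρ *ᵥ v = 0) :
    ‖cfc Real.sqrt ρ - cfc Real.sqrt σ‖ ^ 2 ≤
      Real.log 2 * relEnt ρ σ - ρ.trace.re + σ.trace.re := by
  have hρh := hρ.isHermitian
  have hσh := hσ.isHermitian
  have htrρ : ρ.trace.re = ∑ i, ∑ j, hρh.eigenvalues i * eigenOverlap hρh hσh i j := by
    have h := trace_cfc_left hρh hσh id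
    rw [cfc_id ℝ ρ hρh.isSelfAdjoint] at h
    exact congrArg Complex.re h
  have htrσ : σ.trace.re = ∑ i, ∑ j, hσh.eigenvalues j * eigenOverlap hρh hσh i j := by
    have h := trace_cfc_right hρh hσh id
    rw [cfc_id ℝ σ hσh.isSelfAdjoint] at h
    exact congrArg Complex.re h
  rw [frobenius_norm_sq_cfc_sub_cfc hρh hσh, relEnt_eq_sum hρh hσh, htrρ, htrσ]
  simp only [Finset.mul_sum, ← Finset.sum_sub_distrib, ← Finset.sum_add_distrib]
  refine Finset.sum_le_sum fun i _ => Finset.sum_le_sum fun j _ => ?_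
  rcases (eigenOverlap_nonneg hρh hσh i j).eq_or_lt with hc | hc
  · simp [← hc]
  have hscalar := sq_sqrt_sub_sqrt_le (hρ.eigenvalues_nonneg i) (hσ.eigenvalues_nonneg j)
    fun hj => (mul_eq_zero_iff_right hc.ne').1 <|
      eigenvalues_mul_eigenOverlap_eq_zero hρh hσh hsupp hj i
  refine (mul_le_mul_of_nonneg_right hscalar hc.le).trans_eq ?_
  have hlog2 : Real.log 2 ≠ 0 := (Real.log_pos one_lt_two).ne'
  simp only [Real.logb]
  field_simp

theorem quantum_pinsker_general (hρ : ρ.PosSemidef) (hσ : σ.PosSemidef)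
    (hsupp : ∀ v : n → ℂ, σ *ᵥ v = 0 → ρ *ᵥ v = 0) :
    (traceNorm (ρ - σ)) ^ 2 ≤
      2 * (ρ.trace.re + σ.trace.re) * (Real.log 2 * relEnt ρ σ - ρ.trace.re + σ.trace.re) := by
  set A := cfc Real.sqrt ρ
  set B := cfc Real.sqrt σ
  have htraceNorm : traceNorm (ρ - σ) ≤ ‖A + B‖ * ‖A - B‖ := by
    simpa only [A, B, cfc_sqrt_mul_conjTranspose_self hρ, cfc_sqrt_mul_conjTranspose_self hσ,
      mul_comm] using traceNorm_mul_conjTranspose_sub_le A B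
  have hsum : ‖A + B‖ ^ 2 ≤ 2 * (ρ.trace.re + σ.trace.re) := by
    simp only [← RCLike.re_eq_complex_re, ← frobenius_norm_sq_cfc_sqrt hρ,
      ← frobenius_norm_sq_cfc_sqrt hσ]
    exact (pow_le_pow_left₀ (norm_nonneg _) (norm_add_le A B) 2).trans add_sq_le
  calc (traceNorm (ρ - σ)) ^ 2
    _ ≤ ‖A + B‖ ^ 2 * ‖A - B‖ ^ 2 := by
      rw [← mul_pow]
      exact pow_le_pow_left₀ (traceNorm_nonneg _) htraceNorm 2
    _ ≤ _ := mul_le_mul hsum (frobenius_norm_sq_sqrt_sub_sqrt_le hρ hσ hsupp) (sq_nonneg _)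
      ((sq_nonneg _).trans hsum)

end RelativeEntropy

/-- quantum Pinsker inequality (Tr|ρ−σ|)² ≤ 4 S(ρ‖σ) (base-2
relative entropy), under the support condition supp ρ ⊆ supp σ. -/
theorem quantum_pinsker {n : Type*} [Fintype n] [DecidableEq n]
    (ρ σ : Matrix n n ℂ) (hρ : IsDensity ρ) (hσ : IsDensity σ)
    (hsupp : ∀ v : n → ℂ, σ *ᵥ v = 0 → ρ *ᵥ v = 0) :
    (traceNorm (ρ - σ)) ^ 2 ≤ 4 * relEnt ρ σ := by
  have h := quantum_pinsker_general hρ.1 hσ.1 hsupp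
  rw [hρ.2, hσ.2, Complex.one_re] at h
  nlinarith [sq_nonneg (traceNorm (ρ - σ)), Real.log_pos one_lt_two, Real.log_two_lt_d9]
end
end

section
/- Decoupling theorem: let ρ^{ABE} be a tripartite state with dim A = d, and suppose S(ρ^A) ≤ log₂ d, S(Z^A|B)_ρ ≤ ε₁, and S(X^A|B)_ρ ≤ ε₂, where X, Z are conjugate generalized Pauli observables on A. Then Tr|ρ^{AE} − ρ^A ⊗ ρ^E| ≤ 2√(ε₁ + ε₂). -/
open Matrix Kronecker ComplexOrder

noncomputable section

/-!
Pinsker's inequality reduces the bound to the estimate `S(A) - S(A|E) ≤ ε₁ + ε₂` of the mutual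
information of `A` and `E`. Strong subadditivity gives `-S(A|E) ≤ S(A|B)`, and the entropic
uncertainty relation gives `log₂ d + S(A|B) ≤ S(X|B) + S(Z|B)`.

All three inequalities rest on the monotonicity of `S(ρ‖σ)` under channels: apply it to the
measurement in the eigenbasis of `ρ - σ` for Pinsker's inequality; to `Tr_E` of `ρ^{ABE}` and
`1 ⊗ ρ^{BE}` for strong subadditivity, together with the duality `S(A|B) = -S(A|R)` for pure states
on `ABR`; and to the `X`-dephasing of `ρ^{AB}` and its `Z`-dephasing for the uncertainty relation,
where dephasing in both bases yields an operator at most `(1/d) 1 ⊗ ρ^B`.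

For monotonicity, with `L` and `R` denoting left and right multiplication, the relative entropy is
an integral over `s > 0` of the numbers `⟨ρ, (s R_ρ + L_σ)⁻¹ ρ⟩`. Each of them is a supremum over
matrices `W` of a concave quadratic form, and by the Kadison-Schwarz inequality the form of the
image states at `W` is at most the form of the original states at the image of `W` under the
adjoint channel.
-/

/-! ### Spectral decompositions -/

section SpectralDecomp

variable {n m : Type*} [Fintype n] [DecidableEq n] [Fintype m] [DecidableEq m]

/-- `M = U diag(l) Uᴴ` with `U` unitary and `l` real. All spectral quantities below are computed in
an arbitrary such decomposition, not only in the one chosen by `Matrix.IsHermitian.eigenvalues`. -/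
structure IsSpectralDecomp (M U : Matrix n n ℂ) (l : n → ℝ) : Prop where
  mem_unitaryGroup : U ∈ unitaryGroup n ℂ
  eq : M = U * diagonal (fun i => (l i : ℂ)) * Uᴴ

theorem isSpectralDecomp_eigenvectorUnitary {M : Matrix n n ℂ} (h : M.IsHermitian) :
    IsSpectralDecomp M h.eigenvectorUnitary h.eigenvalues where
  mem_unitaryGroup := h.eigenvectorUnitary.2
  eq := by
    conv_lhs => rw [h.spectral_theorem, Unitary.conjStarAlgAut_apply]
    rfl

theorem exists_isSpectralDecomp {M : Matrix n n ℂ} (h : M.IsHermitian) :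
    ∃ U l, IsSpectralDecomp M U l :=
  ⟨_, _, isSpectralDecomp_eigenvectorUnitary h⟩

namespace IsSpectralDecomp

variable {M U : Matrix n n ℂ} {l : n → ℝ} {N V : Matrix m m ℂ} {μ : m → ℝ}

theorem conjTranspose_mul_self (h : IsSpectralDecomp M U l) : Uᴴ * U = 1 :=
  mem_unitaryGroup_iff'.1 h.mem_unitaryGroup

theorem self_mul_conjTranspose (h : IsSpectralDecomp M U l) : U * Uᴴ = 1 :=
  mem_unitaryGroup_iff.1 h.mem_unitaryGroup

theorem mul_eigenbasis (h : IsSpectralDecomp M U l) :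
    M * U = U * diagonal (fun i => (l i : ℂ)) := by
  rw [h.eq, Matrix.mul_assoc, h.conjTranspose_mul_self, Matrix.mul_one]

theorem conjTranspose_mul_mul (h : IsSpectralDecomp M U l) :
    Uᴴ * M * U = diagonal (fun i => (l i : ℂ)) := by
  rw [Matrix.mul_assoc, h.mul_eigenbasis, ← Matrix.mul_assoc, h.conjTranspose_mul_self,
    Matrix.one_mul]

theorem isHermitian (h : IsSpectralDecomp M U l) : M.IsHermitian := by
  rw [h.eq]
  exact isHermitian_mul_mul_conjTranspose _
    (isHermitian_diagonal_of_self_adjoint _ (funext fun i => Complex.conj_ofReal (l i)))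

theorem nonneg (h : IsSpectralDecomp M U l) (hM : M.PosSemidef) (i : n) : 0 ≤ l i := by
  have hdiag := (hM.conjTranspose_mul_mul_same U).diag_nonneg (i := i)
  rwa [h.conjTranspose_mul_mul, diagonal_apply_eq, Complex.zero_le_real] at hdiag

theorem trace_eq (h : IsSpectralDecomp M U l) : M.trace = ∑ i, (l i : ℂ) := by
  rw [h.eq, trace_mul_comm, ← Matrix.mul_assoc, h.conjTranspose_mul_self, Matrix.one_mul,
    trace_diagonal]

theorem intertwine (hM : IsSpectralDecomp M U l) (hN : IsSpectralDecomp N V μ)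
    (f : ℝ → ℝ) {X : Matrix n m ℂ} (hX : M * X = X * N) :
    U * diagonal (fun i => (f (l i) : ℂ)) * Uᴴ * X =
      X * (V * diagonal (fun j => (f (μ j) : ℂ)) * Vᴴ) := by
  set Y := Uᴴ * X * V with hY
  have hXY : X = U * Y * Vᴴ := by
    simp only [hY, Matrix.mul_assoc, hN.self_mul_conjTranspose, Matrix.mul_one]
    rw [← Matrix.mul_assoc, hM.self_mul_conjTranspose, Matrix.one_mul]
  have hcomm : diagonal (fun i => (l i : ℂ)) * Y = Y * diagonal (fun j => (μ j : ℂ)) := by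
    calc diagonal (fun i => (l i : ℂ)) * Y = Uᴴ * (M * (U * Uᴴ) * X) * V := by
          rw [← hM.conjTranspose_mul_mul, hY]; simp only [Matrix.mul_assoc]
      _ = Uᴴ * X * (N * V) := by
          rw [hM.self_mul_conjTranspose, Matrix.mul_one, hX]; simp only [Matrix.mul_assoc]
      _ = Y * diagonal (fun j => (μ j : ℂ)) := by
          rw [hN.mul_eigenbasis, hY]; simp only [Matrix.mul_assoc]
  have hcommf :
      diagonal (fun i => (f (l i) : ℂ)) * Y = Y * diagonal (fun j => (f (μ j) : ℂ)) := by
    ext i j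
    have hij := congrFun₂ hcomm i j
    simp only [diagonal_mul, mul_diagonal] at hij ⊢
    by_cases h0 : Y i j = 0
    · simp [h0]
    · rw [mul_comm (Y i j), mul_left_inj' h0, Complex.ofReal_inj] at hij
      rw [hij, mul_comm]
  calc U * diagonal (fun i => (f (l i) : ℂ)) * Uᴴ * X
      = U * (diagonal (fun i => (f (l i) : ℂ)) * ((Uᴴ * U) * Y)) * Vᴴ := by
        rw [hXY]; simp only [Matrix.mul_assoc]
    _ = U * (Y * ((Vᴴ * V) * diagonal (fun j => (f (μ j) : ℂ)))) * Vᴴ := by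
        rw [hM.conjTranspose_mul_self, hN.conjTranspose_mul_self, Matrix.one_mul, Matrix.one_mul,
          hcommf]
    _ = X * (V * diagonal (fun j => (f (μ j) : ℂ)) * Vᴴ) := by
        rw [hXY]; simp only [Matrix.mul_assoc]

theorem mlog (h : IsSpectralDecomp M U l) :
    IsSpectralDecomp (mlog M) U (fun i => Real.logb 2 (l i)) where
  mem_unitaryGroup := h.mem_unitaryGroup
  eq := by
    have h' := isSpectralDecomp_eigenvectorUnitary h.isHermitian
    have hcomm := h.intertwine h' (Real.logb 2) (X := 1) (by simp)
    rw [Matrix.mul_one, Matrix.one_mul] at hcomm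
    rw [hcomm, _root_.mlog, dif_pos h.isHermitian]

theorem transpose (h : IsSpectralDecomp M U l) : IsSpectralDecomp Mᵀ Uᴴᵀ l := by
  have hstar : Uᴴᵀᴴ = Uᵀ := by
    rw [conjTranspose_transpose_eq_transpose_conjTranspose, conjTranspose_conjTranspose]
  constructor
  · rw [mem_unitaryGroup_iff, star_eq_conjTranspose, hstar, ← transpose_mul,
      h.self_mul_conjTranspose, transpose_one]
  · rw [hstar, h.eq, transpose_mul, transpose_mul, diagonal_transpose, Matrix.mul_assoc]

theorem kronecker (hM : IsSpectralDecomp M U l) (hN : IsSpectralDecomp N V μ) :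
    IsSpectralDecomp (M ⊗ₖ N) (U ⊗ₖ V) (fun p => l p.1 * μ p.2) where
  mem_unitaryGroup := kronecker_mem_unitary hM.mem_unitaryGroup hN.mem_unitaryGroup
  eq := by
    have hdiag : diagonal (fun p : n × m => ((l p.1 * μ p.2 : ℝ) : ℂ)) =
        diagonal (fun i => (l i : ℂ)) ⊗ₖ diagonal (fun j => (μ j : ℂ)) := by
      rw [diagonal_kronecker_diagonal]
      simp only [Complex.ofReal_mul]
    rw [hdiag, conjTranspose_kronecker, ← mul_kronecker_mul, ← mul_kronecker_mul, ← hM.eq, ← hN.eq]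

end IsSpectralDecomp

theorem isSpectralDecomp_real_smul_one (c : ℝ) :
    IsSpectralDecomp ((c : ℂ) • (1 : Matrix n n ℂ)) 1 (fun _ => c) where
  mem_unitaryGroup := one_mem _
  eq := by simp [smul_one_eq_diagonal]

theorem mlog_mul_eq_mul_mlog {M : Matrix n n ℂ} {N : Matrix m m ℂ} {X : Matrix n m ℂ}
    (hM : M.IsHermitian) (hN : N.IsHermitian) (hX : M * X = X * N) :
    mlog M * X = X * mlog N := by
  have h := (isSpectralDecomp_eigenvectorUnitary hM).intertwine
    (isSpectralDecomp_eigenvectorUnitary hN) (Real.logb 2) hX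
  simpa only [mlog, dif_pos hM, dif_pos hN] using h

theorem mlog_real_smul_one (c : ℝ) :
    mlog ((c : ℂ) • (1 : Matrix n n ℂ)) = (Real.logb 2 c : ℂ) • 1 := by
  rw [(isSpectralDecomp_real_smul_one c).mlog.eq]
  simp [smul_one_eq_diagonal]

theorem mlog_transpose (M : Matrix n n ℂ) : mlog Mᵀ = (mlog M)ᵀ := by
  by_cases h : M.IsHermitian
  · have hM := isSpectralDecomp_eigenvectorUnitary h
    rw [hM.transpose.mlog.eq, hM.mlog.transpose.eq]
  · rw [mlog, mlog, dif_neg h, dif_neg (mt (fun h' => by simpa using h'.transpose) h),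
      transpose_zero]

theorem vN_eq_neg_trace {M : Matrix n n ℂ} (h : M.IsHermitian) :
    vN M = -(M * mlog M).trace.re := by
  have hM := isSpectralDecomp_eigenvectorUnitary h
  have htrace : (M * mlog M).trace =
      ∑ i, (h.eigenvalues i : ℂ) * (Real.logb 2 (h.eigenvalues i) : ℂ) := by
    rw [hM.mlog.eq, ← Matrix.mul_assoc, ← Matrix.mul_assoc, trace_mul_comm, ← Matrix.mul_assoc,
      ← Matrix.mul_assoc, hM.conjTranspose_mul_mul, diagonal_mul_diagonal, trace_diagonal]
  rw [vN, dif_pos h, htrace, Finset.sum_neg_distrib]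
  simp [Complex.re_sum]

theorem vN_transpose {M : Matrix n n ℂ} (h : M.IsHermitian) : vN Mᵀ = vN M := by
  rw [vN_eq_neg_trace h, vN_eq_neg_trace h.transpose, mlog_transpose, ← transpose_mul,
    trace_transpose, trace_mul_comm]

theorem vN_mul_conjTranspose_comm (K : Matrix n m ℂ) : vN (K * Kᴴ) = vN (Kᴴ * K) := by
  have hlog : mlog (K * Kᴴ) * K = K * mlog (Kᴴ * K) :=
    mlog_mul_eq_mul_mlog (isHermitian_mul_conjTranspose_self K)
      (isHermitian_conjTranspose_mul_self K) (Matrix.mul_assoc _ _ _)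
  rw [vN_eq_neg_trace (isHermitian_mul_conjTranspose_self K),
    vN_eq_neg_trace (isHermitian_conjTranspose_mul_self K), trace_mul_comm, ← Matrix.mul_assoc,
    hlog, Matrix.mul_assoc, trace_mul_comm, Matrix.mul_assoc, trace_mul_comm, Matrix.mul_assoc]

theorem vN_transpose_conjTranspose_mul_self (K : Matrix n m ℂ) : vN (Kᴴ * K)ᵀ = vN (K * Kᴴ) := by
  rw [vN_transpose (isHermitian_conjTranspose_mul_self K), vN_mul_conjTranspose_comm]

theorem relEnt_eq_neg_vN_sub {ρ σ : Matrix n n ℂ} (hρ : ρ.IsHermitian) :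
    relEnt ρ σ = -vN ρ - (ρ * mlog σ).trace.re := by
  rw [relEnt, Matrix.mul_sub, trace_sub, Complex.sub_re, vN_eq_neg_trace hρ, neg_neg]

end SpectralDecomp

/-! ### Monotonicity of the relative entropy -/

section ScalarComparison

variable {κ : Type*} [Fintype κ] {w r : κ → ℝ}

theorem tendsto_log_add_sub_log_atTop (c : ℝ) :
    Filter.Tendsto (fun s : ℝ => Real.log (s + c) - Real.log s) Filter.atTop (nhds 0) := by
  have hlim : Filter.Tendsto (fun s : ℝ => Real.log (1 + c / s)) Filter.atTop
      (nhds (Real.log (1 + 0))) :=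
    (tendsto_const_nhds.add (tendsto_const_nhds.div_atTop Filter.tendsto_id)).log (by norm_num)
  rw [add_zero, Real.log_one] at hlim
  refine hlim.congr' ?_
  filter_upwards [Filter.eventually_gt_atTop 0, Filter.eventually_gt_atTop (-c)] with s hs hsc
  rw [← Real.log_div (by linarith) hs.ne', add_div, div_self hs.ne']

theorem monotoneOn_sum_mul_log_add (hr : ∀ k, w k ≠ 0 → 0 < r k)
    (h : ∀ s : ℝ, 0 < s → 0 ≤ ∑ k, w k / (s + r k)) :
    MonotoneOn (fun s => ∑ k, w k * Real.log (s + r k)) (Set.Ici 0) := by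
  have hderiv (s : ℝ) (hs : 0 ≤ s) :
      HasDerivAt (fun s => ∑ k, w k * Real.log (s + r k)) (∑ k, w k / (s + r k)) s := by
    refine HasDerivAt.fun_sum fun k _ => ?_
    rcases eq_or_ne (w k) 0 with hw | hw
    · simpa [hw] using hasDerivAt_const s (0 : ℝ)
    · have hpos := hr k hw
      simpa [div_eq_mul_inv] using
        (((hasDerivAt_id s).add_const (r k)).log
          (add_pos_of_nonneg_of_pos hs hpos).ne').const_mul (w k)
  refine monotoneOn_of_deriv_nonneg (convex_Ici 0)
    (fun s hs => (hderiv s hs).continuousAt.continuousWithinAt) (fun s hs => ?_) fun s hs => ?_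
  all_goals rw [interior_Ici] at hs
  · exact (hderiv s (le_of_lt hs)).differentiableAt.differentiableWithinAt
  · rw [(hderiv s (le_of_lt hs)).deriv]
    exact h s hs

theorem sum_mul_log_nonpos (hr : ∀ k, w k ≠ 0 → 0 < r k) (hw : ∑ k, w k = 0)
    (h : ∀ s : ℝ, 0 < s → 0 ≤ ∑ k, w k / (s + r k)) : ∑ k, w k * Real.log (r k) ≤ 0 := by
  have hlim : Filter.Tendsto (fun s => ∑ k, w k * Real.log (s + r k)) Filter.atTop (nhds 0) := by
    have hsum := tendsto_finsetSum Finset.univ fun k _ =>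
      (tendsto_log_add_sub_log_atTop (r k)).const_mul (w k)
    simpa only [mul_sub, Finset.sum_sub_distrib, ← Finset.sum_mul, hw, zero_mul, sub_zero,
      mul_zero, Finset.sum_const_zero] using hsum
  refine ge_of_tendsto hlim ?_
  filter_upwards [Filter.eventually_ge_atTop 0] with s hs
  simpa using monotoneOn_sum_mul_log_add hr h Set.self_mem_Ici hs hs

end ScalarComparison

section RelEntSum

variable {n m : Type*} [Fintype n] [DecidableEq n]

theorem mul_diagonal_mul_conjTranspose_apply_self (C : Matrix m n ℂ) (l : n → ℝ) (j : m) :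
    (C * diagonal (fun i => (l i : ℂ)) * Cᴴ) j j =
      ∑ i, ((Complex.normSq (C j i) * l i : ℝ) : ℂ) := by
  rw [Matrix.mul_apply]
  refine Finset.sum_congr rfl fun i _ => ?_
  rw [mul_diagonal, conjTranspose_apply, mul_right_comm, Complex.star_def, Complex.mul_conj,
    Complex.ofReal_mul]

variable {ρ σ U V : Matrix n n ℂ} {l μ : n → ℝ}

namespace IsSpectralDecomp

theorem one (hU : U ∈ unitaryGroup n ℂ) : IsSpectralDecomp 1 U (fun _ => 1) where
  mem_unitaryGroup := hU
  eq := by simpa using (mem_unitaryGroup_iff.1 hU).symm.trans (by rw [star_eq_conjTranspose])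

theorem mul (hρ : IsSpectralDecomp ρ U l) (hσ : IsSpectralDecomp σ U μ) :
    IsSpectralDecomp (ρ * σ) U (fun i => l i * μ i) where
  mem_unitaryGroup := hρ.mem_unitaryGroup
  eq := by
    rw [hσ.eq, ← Matrix.mul_assoc, ← Matrix.mul_assoc, hρ.mul_eigenbasis,
      Matrix.mul_assoc U, diagonal_mul_diagonal]
    simp only [Complex.ofReal_mul]

theorem re_trace_mul (hρ : IsSpectralDecomp ρ U l) (hσ : IsSpectralDecomp σ V μ) :
    (ρ * σ).trace.re = ∑ j, ∑ i, Complex.normSq ((Vᴴ * U) j i) * l i * μ j := by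
  have hcyc : (ρ * σ).trace = ((Vᴴ * U) * diagonal (fun i => (l i : ℂ)) * (Vᴴ * U)ᴴ *
      diagonal (fun j => (μ j : ℂ))).trace := by
    rw [hρ.eq, hσ.eq, ← Matrix.mul_assoc, trace_mul_comm]
    simp only [conjTranspose_mul, conjTranspose_conjTranspose, Matrix.mul_assoc]
  rw [hcyc]
  simp only [trace, diag_apply, mul_diagonal, mul_diagonal_mul_conjTranspose_apply_self,
    Complex.re_sum, Complex.re_mul_ofReal, Complex.ofReal_re, Finset.sum_mul]

theorem sum_overlap_mul_left (hρ : IsSpectralDecomp ρ U l) (hσ : IsSpectralDecomp σ V μ) :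
    ∑ j, ∑ i, Complex.normSq ((Vᴴ * U) j i) * l i = ∑ i, l i := by
  have h := hρ.re_trace_mul (one hσ.mem_unitaryGroup)
  simp only [hρ.trace_eq, mul_one, Complex.re_sum, Complex.ofReal_re] at h
  exact h.symm

theorem relEnt_eq_sum (hρ : IsSpectralDecomp ρ U l) (hσ : IsSpectralDecomp σ V μ) :
    relEnt ρ σ = ∑ j, ∑ i, Complex.normSq ((Vᴴ * U) j i) * l i *
      (Real.logb 2 (l i) - Real.logb 2 (μ j)) := by
  rw [relEnt, Matrix.mul_sub, trace_sub, Complex.sub_re, hρ.re_trace_mul hσ.mlog,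
    ← Matrix.mul_one (ρ * _root_.mlog ρ), (hρ.mul hρ.mlog).re_trace_mul (one hσ.mem_unitaryGroup)]
  simp only [mul_one, ← Finset.sum_sub_distrib, mul_sub, mul_assoc]

end IsSpectralDecomp

end RelEntSum

section SuppLE

variable {n : Type*} [Fintype n] [DecidableEq n]

/-- Inclusion of supports `supp ρ ⊆ supp σ` for positive semidefinite matrices, encoded as the
inclusion of kernels `ker σ ⊆ ker ρ`. Since `Real.logb 2 0 = 0`, the number `relEnt ρ σ` is the
relative entropy only under this condition. -/
def SuppLE (ρ σ : Matrix n n ℂ) : Prop :=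
  ∀ v, σ *ᵥ v = 0 → ρ *ᵥ v = 0

theorem SuppLE.mul_apply_eq_zero {ρ σ V : Matrix n n ℂ} {μ : n → ℝ} (h : SuppLE ρ σ)
    (hσ : IsSpectralDecomp σ V μ) {j : n} (hj : μ j = 0) (i : n) : (ρ * V) i j = 0 := by
  refine congrFun (h (V.col j) (funext fun k => ?_)) i
  have hcol := congrFun₂ hσ.mul_eigenbasis k j
  rwa [mul_diagonal, hj, Complex.ofReal_zero, mul_zero] at hcol

theorem IsSpectralDecomp.suppLE_of_mul_apply_eq_zero {ρ σ V : Matrix n n ℂ} {μ : n → ℝ}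
    (hσ : IsSpectralDecomp σ V μ) (h : ∀ j, μ j = 0 → ∀ i, (ρ * V) i j = 0) : SuppLE ρ σ := by
  intro v hv
  have hdiag : diagonal (fun j => (μ j : ℂ)) *ᵥ (Vᴴ *ᵥ v) = 0 := by
    have hσV : diagonal (fun j => (μ j : ℂ)) * Vᴴ = Vᴴ * σ := by
      rw [hσ.eq, ← Matrix.mul_assoc, ← Matrix.mul_assoc, hσ.conjTranspose_mul_self, Matrix.one_mul]
    rw [mulVec_mulVec, hσV, ← mulVec_mulVec, hv, mulVec_zero]
  have hcoord (j : n) : (μ j : ℂ) * (Vᴴ *ᵥ v) j = 0 :=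
    (mulVec_diagonal _ _ j).symm.trans (congrFun hdiag j)
  rw [← one_mulVec v, ← hσ.self_mul_conjTranspose, ← mulVec_mulVec, mulVec_mulVec]
  refine funext fun i => Finset.sum_eq_zero fun j _ => ?_
  change (ρ * V) i j * (Vᴴ *ᵥ v) j = 0
  rcases mul_eq_zero.1 (hcoord j) with hj | hj
  · rw [h j (Complex.ofReal_eq_zero.1 hj), zero_mul]
  · rw [hj, mul_zero]

theorem SuppLE.overlap_mul_eq_zero {ρ σ U V : Matrix n n ℂ} {l μ : n → ℝ} (h : SuppLE ρ σ)
    (hρ : IsSpectralDecomp ρ U l) (hσ : IsSpectralDecomp σ V μ) {j : n} (hj : μ j = 0) (i : n) :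
    Complex.normSq ((Vᴴ * U) j i) * l i = 0 := by
  have hrow : (Vᴴ * U) j i * l i = 0 := by
    rw [← mul_diagonal (fun i => (l i : ℂ)), Matrix.mul_assoc, ← hρ.mul_eigenbasis,
      ← Matrix.mul_assoc]
    have hV (k : n) : (Vᴴ * ρ) j k = 0 := by
      rw [← hρ.isHermitian.eq, ← conjTranspose_mul, conjTranspose_apply,
        h.mul_apply_eq_zero hσ hj, star_zero]
    simp only [Matrix.mul_apply (M := Vᴴ * ρ), hV, zero_mul, Finset.sum_const_zero]
  rcases mul_eq_zero.1 hrow with h0 | h0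
  · rw [h0, map_zero, zero_mul]
  · rw [Complex.ofReal_eq_zero.1 h0, mul_zero]

end SuppLE

section Variational

variable {n : Type*} [Fintype n]

/-- The concave quadratic functional `W ↦ 2 Re tr(Wᴴρ) - s tr(WρWᴴ) - tr(WᴴσW)`. Its supremum is
`⟨ρ, (s R_ρ + L_σ)⁻¹ ρ⟩`, for the left and right multiplication operators `L` and `R`; integrated
over `s > 0` these quantities give the relative entropy. -/
def resolventForm (s : ℝ) (ρ σ W : Matrix n n ℂ) : ℝ :=
  2 * (Wᴴ * ρ).trace.re - s * (W * ρ * Wᴴ).trace.re - (Wᴴ * σ * W).trace.re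

variable [DecidableEq n] {ρ σ U V : Matrix n n ℂ} {l μ : n → ℝ}

theorem IsSpectralDecomp.re_trace_mul_mul_conjTranspose (hρ : IsSpectralDecomp ρ U l)
    (W : Matrix n n ℂ) :
    (W * ρ * Wᴴ).trace.re = ∑ j, ∑ i, Complex.normSq ((W * U) j i) * l i := by
  have hconj : W * ρ * Wᴴ = (W * U) * diagonal (fun i => (l i : ℂ)) * (W * U)ᴴ := by
    conv_lhs => rw [hρ.eq]
    simp only [conjTranspose_mul, Matrix.mul_assoc]
  rw [hconj]
  simp only [trace, diag_apply, mul_diagonal_mul_conjTranspose_apply_self, Complex.re_sum,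
    Complex.ofReal_re]

theorem IsSpectralDecomp.resolventForm_eq_sum (hρ : IsSpectralDecomp ρ U l)
    (hσ : IsSpectralDecomp σ V μ) (s : ℝ) (W : Matrix n n ℂ) :
    resolventForm s ρ σ W =
      ∑ j, ∑ i, (2 * ((star ((Vᴴ * W * U) j i) * (Vᴴ * U) j i).re * l i)
        - Complex.normSq ((Vᴴ * W * U) j i) * (s * l i + μ j)) := by
  have hlinear : (Wᴴ * ρ).trace.re =
      ∑ j, ∑ i, (star ((Vᴴ * W * U) j i) * (Vᴴ * U) j i).re * l i := by
    have hcyc : (Wᴴ * ρ).trace =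
        ((Vᴴ * W * U)ᴴ * (Vᴴ * U) * diagonal (fun i => (l i : ℂ))).trace := by
      calc (Wᴴ * ρ).trace = (Wᴴ * (V * Vᴴ) * U * diagonal (fun i => (l i : ℂ)) * Uᴴ).trace := by
            rw [hσ.self_mul_conjTranspose, Matrix.mul_one, hρ.eq]; simp only [Matrix.mul_assoc]
        _ = _ := by
            rw [trace_mul_comm]
            simp only [conjTranspose_mul, conjTranspose_conjTranspose, Matrix.mul_assoc]
    rw [hcyc, Finset.sum_comm]
    simp only [trace, diag_apply, mul_diagonal, Matrix.mul_apply (M := (Vᴴ * W * U)ᴴ),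
      conjTranspose_apply, Complex.re_sum, Complex.re_mul_ofReal, Finset.sum_mul]
  have hright : (W * ρ * Wᴴ).trace.re = ∑ j, ∑ i, Complex.normSq ((Vᴴ * W * U) j i) * l i := by
    rw [← hρ.re_trace_mul_mul_conjTranspose, conjTranspose_mul, conjTranspose_conjTranspose,
      ← Matrix.mul_assoc, trace_mul_comm _ V]
    simp only [← Matrix.mul_assoc, hσ.self_mul_conjTranspose, Matrix.one_mul]
  have hleft : (Wᴴ * σ * W).trace.re = ∑ j, ∑ i, Complex.normSq ((Vᴴ * W * U) j i) * μ j := by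
    have hconj (j i : n) : Complex.normSq ((Vᴴ * W * U) j i) =
        Complex.normSq ((Uᴴ * Wᴴ * V) i j) := by
      rw [← Complex.normSq_conj, ← Complex.star_def, ← conjTranspose_apply]
      simp only [conjTranspose_mul, conjTranspose_conjTranspose, Matrix.mul_assoc]
    rw [Finset.sum_comm]
    simp only [hconj]
    rw [← hσ.re_trace_mul_mul_conjTranspose, conjTranspose_mul, conjTranspose_conjTranspose,
      conjTranspose_conjTranspose, ← Matrix.mul_assoc, trace_mul_comm _ U]
    simp only [← Matrix.mul_assoc, hρ.self_mul_conjTranspose, Matrix.one_mul]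
  simp only [resolventForm, hlinear, hright, hleft, Finset.mul_sum, ← Finset.sum_sub_distrib]
  refine Finset.sum_congr rfl fun j _ => Finset.sum_congr rfl fun i _ => ?_
  ring

theorem two_mul_re_sub_normSq_mul_le (x c : ℂ) {l t : ℝ} (ht : 0 ≤ t) (h : t = 0 → l = 0) :
    2 * ((star x * c).re * l) - Complex.normSq x * t ≤ Complex.normSq c * l ^ 2 / t := by
  rcases ht.eq_or_lt with h0 | h0
  · simp [h h0.symm, ← h0]
  · have hsq : 0 ≤ Complex.normSq (c * l - t * x) := Complex.normSq_nonneg _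
    rw [le_div_iff₀ h0]
    simp only [Complex.normSq_apply, Complex.sub_re, Complex.sub_im, Complex.mul_re, Complex.mul_im,
      Complex.ofReal_re, Complex.ofReal_im, Complex.star_def, Complex.conj_re,
      Complex.conj_im] at hsq ⊢
    nlinarith only [hsq]

theorem two_mul_re_sub_normSq_mul_eq (c : ℂ) (l t : ℝ) :
    2 * ((star (c * (l / t : ℝ)) * c).re * l) - Complex.normSq (c * (l / t : ℝ)) * t =
      Complex.normSq c * l ^ 2 / t := by
  have hre : (star (c * (l / t : ℝ)) * c).re = Complex.normSq c * (l / t) := by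
    rw [Complex.star_def, map_mul, mul_right_comm, Complex.conj_ofReal,
      ← Complex.normSq_eq_conj_mul_self, ← Complex.ofReal_mul, Complex.ofReal_re]
  rw [hre, Complex.normSq_mul, Complex.normSq_ofReal]
  rcases eq_or_ne t 0 with rfl | ht
  · simp
  · field_simp
    ring

theorem IsSpectralDecomp.isGreatest_resolventForm (hρ : IsSpectralDecomp ρ U l)
    (hσ : IsSpectralDecomp σ V μ) (hl : ∀ i, 0 ≤ l i) (hμ : ∀ j, 0 ≤ μ j) {s : ℝ} (hs : 0 < s) :
    IsGreatest (Set.range (resolventForm s ρ σ))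
      (∑ j, ∑ i, Complex.normSq ((Vᴴ * U) j i) * l i ^ 2 / (s * l i + μ j)) := by
  constructor
  · let X : Matrix n n ℂ := of fun j i => (Vᴴ * U) j i * ((l i / (s * l i + μ j) : ℝ) : ℂ)
    have hX : Vᴴ * (V * X * Uᴴ) * U = X := by
      rw [Matrix.mul_assoc V, ← Matrix.mul_assoc, hσ.conjTranspose_mul_self, Matrix.one_mul,
        Matrix.mul_assoc, hρ.conjTranspose_mul_self, Matrix.mul_one]
    refine ⟨V * X * Uᴴ, ?_⟩
    rw [hρ.resolventForm_eq_sum hσ, hX]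
    simp only [X, of_apply, two_mul_re_sub_normSq_mul_eq]
  · rintro _ ⟨W, rfl⟩
    rw [hρ.resolventForm_eq_sum hσ]
    refine Finset.sum_le_sum fun j _ => Finset.sum_le_sum fun i _ => ?_
    have hli := mul_nonneg hs.le (hl i)
    exact two_mul_re_sub_normSq_mul_le _ _ (add_nonneg hli (hμ j)) fun h =>
      (mul_eq_zero.1 ((add_eq_zero_iff_of_nonneg hli (hμ j)).1 h).1).resolve_left hs.ne'

end Variational

section Monotonicity

theorem div_pos_of_weight_ne_zero {w l μ : ℝ} (hl : 0 ≤ l) (hμ : 0 ≤ μ) (h : μ = 0 → w * l = 0)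
    (hw : w * l ≠ 0) : 0 < μ / l :=
  div_pos (hμ.lt_of_ne' (mt h hw)) (hl.lt_of_ne' (right_ne_zero_of_mul hw))

theorem mul_div_add_div_eq (w l μ s : ℝ) : w * l / (s + μ / l) = w * l ^ 2 / (s * l + μ) := by
  rcases eq_or_ne l 0 with rfl | hl
  · simp
  · field_simp

theorem weight_mul_log_div {w l μ : ℝ} (h : μ = 0 → w * l = 0) :
    w * l * Real.log (μ / l) = -(w * l * (Real.log l - Real.log μ)) := by
  rcases eq_or_ne (w * l) 0 with hw | hw
  · simp [hw]
  · rw [Real.log_div (mt h hw) (right_ne_zero_of_mul hw)]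
    ring

variable {n m : Type*} [Fintype n] [DecidableEq n] [Fintype m] [DecidableEq m]

theorem IsSpectralDecomp.log_two_mul_relEnt {ρ σ U V : Matrix n n ℂ} {l μ : n → ℝ}
    (hρ : IsSpectralDecomp ρ U l) (hσ : IsSpectralDecomp σ V μ) :
    Real.log 2 * relEnt ρ σ = ∑ j, ∑ i, Complex.normSq ((Vᴴ * U) j i) * l i *
      (Real.log (l i) - Real.log (μ j)) := by
  have hlog : Real.log 2 ≠ 0 := (Real.log_pos one_lt_two).ne'
  rw [hρ.relEnt_eq_sum hσ, Finset.mul_sum]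
  refine Finset.sum_congr rfl fun j _ => ?_
  rw [Finset.mul_sum]
  refine Finset.sum_congr rfl fun i _ => ?_
  rw [Real.logb, Real.logb]
  field_simp

theorem relEnt_le_of_resolventForm_le {ρ σ : Matrix n n ℂ} {ρ' σ' : Matrix m m ℂ}
    (hρ : ρ.PosSemidef) (hσ : σ.PosSemidef) (hρ' : ρ'.PosSemidef) (hσ' : σ'.PosSemidef)
    (htr : ρ'.trace = ρ.trace) (hsupp : SuppLE ρ σ) (hsupp' : SuppLE ρ' σ')
    (hform : ∀ s : ℝ, 0 < s →
      ∀ W', ∃ W, resolventForm s ρ' σ' W' ≤ resolventForm s ρ σ W) :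
    relEnt ρ' σ' ≤ relEnt ρ σ := by
  obtain ⟨U, l, dρ⟩ := exists_isSpectralDecomp hρ.isHermitian
  obtain ⟨V, μ, dσ⟩ := exists_isSpectralDecomp hσ.isHermitian
  obtain ⟨U', l', dρ'⟩ := exists_isSpectralDecomp hρ'.isHermitian
  obtain ⟨V', μ', dσ'⟩ := exists_isSpectralDecomp hσ'.isHermitian
  have hw (j i : n) := hsupp.overlap_mul_eq_zero dρ dσ (j := j) (i := i)
  have hw' (j i : m) := hsupp'.overlap_mul_eq_zero dρ' dσ' (j := j) (i := i)
  have hsum : ∑ i, l' i = ∑ i, l i := by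
    rw [dρ.trace_eq, dρ'.trace_eq] at htr
    exact_mod_cast htr
  have hsup (s : ℝ) (hs : 0 < s) :
      ∑ j, ∑ i, Complex.normSq ((V'ᴴ * U') j i) * l' i ^ 2 / (s * l' i + μ' j) ≤
        ∑ j, ∑ i, Complex.normSq ((Vᴴ * U) j i) * l i ^ 2 / (s * l i + μ j) := by
    obtain ⟨W', hW'⟩ := (dρ'.isGreatest_resolventForm dσ' (dρ'.nonneg hρ') (dσ'.nonneg hσ') hs).1
    obtain ⟨W, hW⟩ := hform s hs W'
    rw [← hW']
    exact hW.trans ((dρ.isGreatest_resolventForm dσ (dρ.nonneg hρ) (dσ.nonneg hσ) hs).2 ⟨W, rfl⟩)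
  -- One weighted sum over the disjoint union of both index sets, the primed part with sign `-1`.
  have hlog := sum_mul_log_nonpos
    (w := Sum.elim (fun x : n × n => Complex.normSq ((Vᴴ * U) x.1 x.2) * l x.2)
      fun x : m × m => -(Complex.normSq ((V'ᴴ * U') x.1 x.2) * l' x.2))
    (r := Sum.elim (fun x => μ x.1 / l x.2) fun x => μ' x.1 / l' x.2)
  simp only [Fintype.sum_sum_type, Fintype.sum_prod_type, Sum.elim_inl, Sum.elim_inr, neg_mul,
    neg_div, Finset.sum_neg_distrib, mul_div_add_div_eq, weight_mul_log_div (hw _ _),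
    weight_mul_log_div (hw' _ _), dρ.sum_overlap_mul_left dσ, dρ'.sum_overlap_mul_left dσ',
    ← dρ.log_two_mul_relEnt dσ, ← dρ'.log_two_mul_relEnt dσ'] at hlog
  have hdiff := hlog (Sum.rec
      (fun x => div_pos_of_weight_ne_zero (dρ.nonneg hρ _) (dσ.nonneg hσ _) (hw _ _))
      fun x hx => div_pos_of_weight_ne_zero (dρ'.nonneg hρ' _) (dσ'.nonneg hσ' _) (hw' _ _)
        (neg_ne_zero.1 hx)) (by linarith) fun s hs => by linarith [hsup s hs]
  exact le_of_mul_le_mul_left (by linarith) (Real.log_pos one_lt_two)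

end Monotonicity

section LoewnerOrder

variable {n : Type*} [Fintype n]

theorem suppLE_of_posSemidef_sub {σ σ' : Matrix n n ℂ} (hσ : σ.PosSemidef)
    (h : (σ' - σ).PosSemidef) : SuppLE σ σ' := by
  intro v hv
  have hsub := h.dotProduct_mulVec_nonneg v
  rw [sub_mulVec, hv, zero_sub, dotProduct_neg, neg_nonneg] at hsub
  exact (hσ.dotProduct_mulVec_zero_iff v).1 (hsub.antisymm (hσ.dotProduct_mulVec_nonneg v))

open scoped MatrixOrder in
theorem exists_eq_mul_conjTranspose {ρ : Matrix n n ℂ} (hρ : ρ.PosSemidef) :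
    ∃ K : Matrix n n ℂ, ρ = K * Kᴴ := by
  classical
  exact CStarAlgebra.nonneg_iff_eq_mul_star_self.1 hρ.nonneg

theorem re_trace_mul_nonneg {ρ σ : Matrix n n ℂ} (hρ : ρ.PosSemidef) (hσ : σ.PosSemidef) :
    0 ≤ (ρ * σ).trace.re := by
  obtain ⟨K, rfl⟩ := exists_eq_mul_conjTranspose hρ
  rw [Matrix.mul_assoc, trace_mul_comm]
  exact (Complex.le_def.1 (hσ.conjTranspose_mul_mul_same K).trace_nonneg).1

theorem re_trace_mul_le {ρ σ σ' : Matrix n n ℂ} (hρ : ρ.PosSemidef) (hσ : (σ' - σ).PosSemidef) :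
    (ρ * σ).trace.re ≤ (ρ * σ').trace.re := by
  simpa [Matrix.mul_sub] using re_trace_mul_nonneg hρ hσ

theorem relEnt_anti_right [DecidableEq n] {ρ σ σ' : Matrix n n ℂ} (hρ : ρ.PosSemidef)
    (hσ : σ.PosSemidef) (hσ' : σ'.PosSemidef) (h : (σ' - σ).PosSemidef) (hsupp : SuppLE ρ σ) :
    relEnt ρ σ' ≤ relEnt ρ σ := by
  refine relEnt_le_of_resolventForm_le hρ hσ hρ hσ' rfl hsupp
    (fun v hv => hsupp v (suppLE_of_posSemidef_sub hσ h v hv)) fun s _ W => ⟨W, ?_⟩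
  have hnonneg := (Complex.le_def.1 (h.conjTranspose_mul_mul_same W).trace_nonneg).1
  rw [Matrix.mul_sub, Matrix.sub_mul, trace_sub, Complex.sub_re, Complex.zero_re] at hnonneg
  rw [resolventForm, resolventForm]
  linarith

end LoewnerOrder

section KrausMap

variable {ι n m : Type*} [Fintype ι] [Fintype n]

/-- The completely positive map `M ↦ ∑ i, K i * M * (K i)ᴴ` with Kraus operators `K`. Its adjoint
for the trace pairing is `krausMap fun i => (K i)ᴴ`. -/
def krausMap (K : ι → Matrix m n ℂ) (M : Matrix n n ℂ) : Matrix m m ℂ :=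
  ∑ i, K i * M * (K i)ᴴ

theorem posSemidef_krausMap [Finite m] (K : ι → Matrix m n ℂ) {M : Matrix n n ℂ}
    (hM : M.PosSemidef) : (krausMap K M).PosSemidef :=
  posSemidef_sum _ fun i _ => hM.mul_mul_conjTranspose_same (K i)

theorem conjTranspose_krausMap (K : ι → Matrix m n ℂ) (M : Matrix n n ℂ) :
    (krausMap K M)ᴴ = krausMap K Mᴴ := by
  simp only [krausMap, conjTranspose_sum, conjTranspose_mul, conjTranspose_conjTranspose,
    Matrix.mul_assoc]

variable [Fintype m]

theorem trace_krausMap_mul (K : ι → Matrix m n ℂ) (M : Matrix n n ℂ) (W : Matrix m m ℂ) :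
    (krausMap K M * W).trace = (M * krausMap (fun i => (K i)ᴴ) W).trace := by
  simp only [krausMap, Finset.sum_mul, Finset.mul_sum, trace_sum, conjTranspose_conjTranspose]
  refine Finset.sum_congr rfl fun i _ => ?_
  rw [Matrix.mul_assoc, Matrix.mul_assoc, trace_mul_comm, Matrix.mul_assoc]

variable {ρ σ : Matrix n n ℂ}

theorem krausMap_mulVec_eq_zero_iff {K : ι → Matrix m n ℂ} (hσ : σ.PosSemidef) {v : m → ℂ} :
    krausMap K σ *ᵥ v = 0 ↔ ∀ i, σ *ᵥ ((K i)ᴴ *ᵥ v) = 0 := by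
  have hterm (i : ι) : star v ⬝ᵥ (K i * σ * (K i)ᴴ) *ᵥ v =
      star ((K i)ᴴ *ᵥ v) ⬝ᵥ σ *ᵥ ((K i)ᴴ *ᵥ v) := by
    rw [star_mulVec, conjTranspose_conjTranspose, ← dotProduct_mulVec, mulVec_mulVec,
      mulVec_mulVec, Matrix.mul_assoc]
  rw [← (posSemidef_krausMap K hσ).dotProduct_mulVec_zero_iff, krausMap, sum_mulVec,
    dotProduct_sum, Finset.sum_eq_zero_iff_of_nonneg fun i _ =>
      (hσ.mul_mul_conjTranspose_same (K i)).dotProduct_mulVec_nonneg v]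
  simp only [hterm, hσ.dotProduct_mulVec_zero_iff, Finset.mem_univ, true_imp_iff]

theorem SuppLE.krausMap {K : ι → Matrix m n ℂ} (hρ : ρ.PosSemidef) (hσ : σ.PosSemidef)
    (h : SuppLE ρ σ) : SuppLE (krausMap K ρ) (krausMap K σ) := fun _ hv =>
  (krausMap_mulVec_eq_zero_iff hρ).2 fun i => h _ ((krausMap_mulVec_eq_zero_iff hσ).1 hv i)

variable [DecidableEq n]

theorem trace_krausMap {K : ι → Matrix m n ℂ} (hK : ∑ i, (K i)ᴴ * K i = 1) (M : Matrix n n ℂ) :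
    (krausMap K M).trace = M.trace := by
  classical
  have hone : krausMap (fun i => (K i)ᴴ) 1 = 1 := by simpa [krausMap] using hK
  simpa [hone] using trace_krausMap_mul K M 1

theorem IsDensity.krausMap {M : Matrix n n ℂ} (hM : IsDensity M) {K : ι → Matrix m n ℂ}
    (hK : ∑ i, (K i)ᴴ * K i = 1) : IsDensity (krausMap K M) :=
  ⟨posSemidef_krausMap K hM.1, (trace_krausMap hK M).trans hM.2⟩

theorem posSemidef_kadisonSchwarz {K : ι → Matrix m n ℂ} (hK : ∑ i, (K i)ᴴ * K i = 1)
    (W : Matrix m m ℂ) :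
    (krausMap (fun i => (K i)ᴴ) (Wᴴ * W) -
      (krausMap (fun i => (K i)ᴴ) W)ᴴ * krausMap (fun i => (K i)ᴴ) W).PosSemidef := by
  set T := krausMap (fun i => (K i)ᴴ) W with hT
  have hTsum : ∑ i, (K i)ᴴ * W * K i = T := by simp [hT, krausMap]
  have hTsum' : ∑ i, (K i)ᴴ * Wᴴ * K i = Tᴴ := by
    rw [hT, conjTranspose_krausMap]
    simp [krausMap]
  have hsquares : krausMap (fun i => (K i)ᴴ) (Wᴴ * W) - Tᴴ * T =
      ∑ i, (W * K i - K i * T)ᴴ * (W * K i - K i * T) := by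
    have hexpand (i : ι) : (W * K i - K i * T)ᴴ * (W * K i - K i * T) =
        (K i)ᴴ * (Wᴴ * W) * K i - (K i)ᴴ * Wᴴ * K i * T - Tᴴ * ((K i)ᴴ * W * K i) +
          Tᴴ * ((K i)ᴴ * K i) * T := by
      simp only [conjTranspose_sub, conjTranspose_mul, Matrix.sub_mul, Matrix.mul_sub,
        Matrix.mul_assoc]
      abel
    simp only [hexpand, Finset.sum_add_distrib, Finset.sum_sub_distrib, ← Finset.mul_sum,
      ← Finset.sum_mul, hTsum, hTsum', hK, krausMap, conjTranspose_conjTranspose, Matrix.mul_one]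
    abel
  rw [hsquares]
  exact posSemidef_sum _ fun i _ => posSemidef_conjTranspose_mul_self _

theorem resolventForm_krausMap_le {K : ι → Matrix m n ℂ} (hK : ∑ i, (K i)ᴴ * K i = 1) {s : ℝ}
    (hs : 0 ≤ s) (hρ : ρ.PosSemidef) (hσ : σ.PosSemidef) (W : Matrix m m ℂ) :
    resolventForm s (krausMap K ρ) (krausMap K σ) W ≤
      resolventForm s ρ σ (krausMap (fun i => (K i)ᴴ) W) := by
  set T := krausMap (fun i => (K i)ᴴ) W
  have hlinear : (Wᴴ * krausMap K ρ).trace = (Tᴴ * ρ).trace := by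
    rw [trace_mul_comm, trace_krausMap_mul, ← conjTranspose_krausMap, trace_mul_comm]
  have hright : (T * ρ * Tᴴ).trace.re ≤ (W * krausMap K ρ * Wᴴ).trace.re := by
    have hle := re_trace_mul_le hρ (posSemidef_kadisonSchwarz hK W)
    rwa [← trace_krausMap_mul, ← Matrix.mul_assoc, trace_mul_comm, ← Matrix.mul_assoc,
      ← Matrix.mul_assoc (krausMap K ρ), trace_mul_comm _ W, ← Matrix.mul_assoc] at hle
  have hleft : (Tᴴ * σ * T).trace.re ≤ (Wᴴ * krausMap K σ * W).trace.re := by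
    have hle := re_trace_mul_le hσ (posSemidef_kadisonSchwarz hK Wᴴ)
    rwa [← trace_krausMap_mul, conjTranspose_conjTranspose, ← conjTranspose_krausMap,
      conjTranspose_conjTranspose, ← Matrix.mul_assoc, trace_mul_comm, ← Matrix.mul_assoc,
      ← Matrix.mul_assoc (krausMap K σ), trace_mul_comm _ Wᴴ, ← Matrix.mul_assoc] at hle
  have hsright := mul_le_mul_of_nonneg_left hright hs
  rw [resolventForm, resolventForm, hlinear]
  linarith

theorem suppLE_krausMap_self {K : ι → Matrix n n ℂ} (hρ : ρ.PosSemidef) (c : ι → ℂ)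
    (hc : ∑ i, c i • (K i)ᴴ = 1) : SuppLE ρ (_root_.krausMap K ρ) := by
  intro v hv
  rw [← one_mulVec v, ← hc, sum_mulVec, mulVec_sum]
  refine Finset.sum_eq_zero fun i _ => ?_
  rw [smul_mulVec, mulVec_smul, (krausMap_mulVec_eq_zero_iff hρ).1 hv i, smul_zero]

theorem relEnt_krausMap_le [DecidableEq m] {K : ι → Matrix m n ℂ} (hK : ∑ i, (K i)ᴴ * K i = 1)
    (hρ : ρ.PosSemidef) (hσ : σ.PosSemidef) (hsupp : SuppLE ρ σ) :
    relEnt (krausMap K ρ) (krausMap K σ) ≤ relEnt ρ σ :=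
  relEnt_le_of_resolventForm_le hρ hσ (posSemidef_krausMap K hρ) (posSemidef_krausMap K hσ)
    (trace_krausMap hK ρ) hsupp (hsupp.krausMap hρ hσ) fun _ hs W =>
      ⟨_, resolventForm_krausMap_le hK hs.le hρ hσ W⟩

end KrausMap

section ProjMeasurement

variable {ι n : Type*} [Fintype ι] [Fintype n] [DecidableEq n]

/-- A projective measurement: mutually orthogonal self-adjoint projections with sum `1`. The
associated pinching is `krausMap P`. -/
structure IsProjMeasurement (P : ι → Matrix n n ℂ) : Prop
    extends CompleteOrthogonalIdempotents P where
  isHermitian : ∀ x, (P x).IsHermitian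

namespace IsProjMeasurement

variable {P : ι → Matrix n n ℂ}

theorem sum_conjTranspose_mul_self (hP : IsProjMeasurement P) : ∑ x, (P x)ᴴ * P x = 1 := by
  simp only [(hP.isHermitian _).eq, (hP.idem _).eq, hP.complete]

theorem suppLE_krausMap (hP : IsProjMeasurement P) {ρ : Matrix n n ℂ} (hρ : ρ.PosSemidef) :
    SuppLE ρ (krausMap P ρ) :=
  suppLE_krausMap_self hρ (fun _ => 1) (by simp only [(hP.isHermitian _).eq, one_smul, hP.complete])

theorem mul_krausMap (hP : IsProjMeasurement P) (M : Matrix n n ℂ) (x : ι) :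
    P x * krausMap P M = P x * M * P x := by
  rw [krausMap, Finset.mul_sum, Finset.sum_eq_single x _ (by simp)]
  · rw [← Matrix.mul_assoc, ← Matrix.mul_assoc, (hP.idem x).eq, (hP.isHermitian x).eq]
  · intro y _ hxy
    rw [← Matrix.mul_assoc, ← Matrix.mul_assoc, hP.ortho hxy.symm, Matrix.zero_mul, Matrix.zero_mul]

theorem krausMap_mul (hP : IsProjMeasurement P) (M : Matrix n n ℂ) (x : ι) :
    krausMap P M * P x = P x * M * P x := by
  have h := congrArg conjTranspose (hP.mul_krausMap Mᴴ x)
  simpa only [conjTranspose_mul, conjTranspose_krausMap, conjTranspose_conjTranspose,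
    (hP.isHermitian x).eq, Matrix.mul_assoc] using h

theorem krausMap_eq_self (hP : IsProjMeasurement P) {L : Matrix n n ℂ}
    (hL : ∀ x, P x * L = L * P x) : krausMap P L = L := by
  simp only [krausMap, hL, Matrix.mul_assoc, (hP.isHermitian _).eq, (hP.idem _).eq,
    ← Finset.mul_sum, hP.complete, Matrix.mul_one]

theorem relEnt_krausMap (hP : IsProjMeasurement P) {ρ : Matrix n n ℂ} (hρ : ρ.PosSemidef) :
    relEnt ρ (krausMap P ρ) = vN (krausMap P ρ) - vN ρ := by
  have hherm := (posSemidef_krausMap P hρ).isHermitian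
  have hcomm (x : ι) : P x * mlog (krausMap P ρ) = mlog (krausMap P ρ) * P x :=
    (mlog_mul_eq_mul_mlog hherm hherm
      ((hP.krausMap_mul ρ x).trans (hP.mul_krausMap ρ x).symm)).symm
  have htrace : (krausMap P ρ * mlog (krausMap P ρ)).trace = (ρ * mlog (krausMap P ρ)).trace := by
    rw [trace_krausMap_mul]
    simp only [(hP.isHermitian _).eq, hP.krausMap_eq_self hcomm]
  rw [relEnt_eq_neg_vN_sub hρ.isHermitian, ← htrace, vN_eq_neg_trace hherm]
  ring

end IsProjMeasurement

/-- The orthogonal projection onto the line spanned by the `x`-th column of a unitary `F`. -/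
def basisProj (F : Matrix n n ℂ) (x : n) : Matrix n n ℂ :=
  F * single x x 1 * Fᴴ

theorem basisProj_mul_mul_basisProj (F M G : Matrix n n ℂ) (x y : n) :
    basisProj F x * M * basisProj G y = (Fᴴ * M * G) x y • (F * single x y 1 * Gᴴ) := by
  have hsingle : single x x 1 * (Fᴴ * M * G) * single y y 1 = (Fᴴ * M * G) x y • single x y 1 := by
    rw [single_mul_mul_single, one_mul, mul_one, smul_single, smul_eq_mul, mul_one]
  calc basisProj F x * M * basisProj G y
      = F * (single x x 1 * (Fᴴ * M * G) * single y y 1) * Gᴴ := by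
        simp only [basisProj, Matrix.mul_assoc]
    _ = (Fᴴ * M * G) x y • (F * single x y 1 * Gᴴ) := by
        rw [hsingle, Matrix.mul_smul, Matrix.smul_mul]

theorem basisProj_mul_basisProj (F G : Matrix n n ℂ) (x y : n) :
    basisProj F x * basisProj G y = (Fᴴ * G) x y • (F * single x y 1 * Gᴴ) := by
  simpa only [Matrix.mul_one] using basisProj_mul_mul_basisProj F 1 G x y

theorem sum_smul_basisProj (F : Matrix n n ℂ) (a : n → ℂ) :
    ∑ x, a x • basisProj F x = F * diagonal a * Fᴴ := by
  have hsmul (x : n) : a x • basisProj F x = F * single x x (a x) * Fᴴ := by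
    rw [basisProj, ← Matrix.smul_mul, ← Matrix.mul_smul, smul_single, smul_eq_mul, mul_one]
  simp only [hsmul, ← Finset.sum_mul, ← Finset.mul_sum, sum_single_eq_diagonal]

theorem posSemidef_basisProj (F : Matrix n n ℂ) (x : n) : (basisProj F x).PosSemidef := by
  rw [basisProj, ← diagonal_single]
  exact (PosSemidef.diagonal (Pi.single_nonneg.2 zero_le_one)).mul_mul_conjTranspose_same F

theorem isProjMeasurement_basisProj {F : Matrix n n ℂ} (hF : F ∈ unitaryGroup n ℂ) :
    IsProjMeasurement (basisProj F) where
  idem x := by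
    rw [IsIdempotentElem, basisProj_mul_basisProj, ← star_eq_conjTranspose,
      mem_unitaryGroup_iff'.1 hF, one_apply_eq, one_smul, basisProj, star_eq_conjTranspose]
  ortho x y hxy := by
    change basisProj F x * basisProj F y = 0
    rw [basisProj_mul_basisProj, ← star_eq_conjTranspose, mem_unitaryGroup_iff'.1 hF,
      one_apply_ne hxy, zero_smul]
  complete := by
    have h := sum_smul_basisProj F 1
    simp only [Pi.one_apply, one_smul] at h
    rw [h, diagonal_one', Matrix.mul_one, ← star_eq_conjTranspose, mem_unitaryGroup_iff.1 hF]
  isHermitian x := (posSemidef_basisProj F x).isHermitian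

theorem krausMap_basisProj (F M : Matrix n n ℂ) :
    krausMap (basisProj F) M = F * diagonal (fun x => (Fᴴ * M * F) x x) * Fᴴ := by
  simp only [krausMap, (posSemidef_basisProj F _).isHermitian.eq, basisProj_mul_mul_basisProj]
  exact sum_smul_basisProj F _

theorem isSpectralDecomp_krausMap_basisProj {F : Matrix n n ℂ} (hF : F ∈ unitaryGroup n ℂ)
    {M : Matrix n n ℂ} (hM : M.IsHermitian) :
    IsSpectralDecomp (krausMap (basisProj F) M) F (fun x => ((Fᴴ * M * F) x x).re) where
  mem_unitaryGroup := hF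
  eq := by
    have hre (x : n) : (((Fᴴ * M * F) x x).re : ℂ) = (Fᴴ * M * F) x x :=
      (isHermitian_conjTranspose_mul_mul F hM).coe_re_apply_self x
    simp only [krausMap_basisProj, hre]

end ProjMeasurement

/-! ### Pinsker's inequality -/

section Pinsker

theorem two_mul_sub_sqrt_le_mul_log {p q : ℝ} (hp : 0 ≤ p) (hq : 0 ≤ q) (h : q = 0 → p = 0) :
    2 * p - 2 * (√p * √q) ≤ p * (Real.log p - Real.log q) := by
  rcases hp.eq_or_lt with rfl | hp'
  · simp
  have hq' : 0 < q := hq.lt_of_ne' fun h0 => hp'.ne' (h h0)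
  have hlog := Real.log_le_sub_one_of_pos (div_pos (Real.sqrt_pos.2 hq') (Real.sqrt_pos.2 hp'))
  rw [Real.log_div (Real.sqrt_pos.2 hq').ne' (Real.sqrt_pos.2 hp').ne', Real.log_sqrt hq,
    Real.log_sqrt hp] at hlog
  have hmul : p * (√q / √p) = √p * √q := by
    rw [mul_div_assoc', mul_div_right_comm, Real.div_sqrt]
  nlinarith [mul_le_mul_of_nonneg_left hlog hp]

variable {κ : Type*} [Fintype κ] {p q : κ → ℝ}

theorem sum_sq_sqrt_sub_sqrt_le_sum_mul_log (hp : ∀ k, 0 ≤ p k) (hq : ∀ k, 0 ≤ q k)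
    (h : ∀ k, q k = 0 → p k = 0) (hpq : ∑ k, p k = ∑ k, q k) :
    ∑ k, (√(p k) - √(q k)) ^ 2 ≤ ∑ k, p k * (Real.log (p k) - Real.log (q k)) := by
  calc ∑ k, (√(p k) - √(q k)) ^ 2
      = ∑ k, (2 * p k - 2 * (√(p k) * √(q k))) + (∑ k, q k - ∑ k, p k) := by
        rw [← Finset.sum_sub_distrib, ← Finset.sum_add_distrib]
        refine Finset.sum_congr rfl fun k _ => ?_
        rw [sub_sq, Real.sq_sqrt (hp k), Real.sq_sqrt (hq k)]
        ring
    _ ≤ ∑ k, p k * (Real.log (p k) - Real.log (q k)) := by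
        rw [hpq, sub_self, add_zero]
        exact Finset.sum_le_sum fun k _ => two_mul_sub_sqrt_le_mul_log (hp k) (hq k) (h k)

theorem sq_sum_abs_sub_le_mul_sum_sq_sqrt_sub_sqrt (hp : ∀ k, 0 ≤ p k) (hq : ∀ k, 0 ≤ q k) :
    (∑ k, |p k - q k|) ^ 2 ≤ 2 * (∑ k, p k + ∑ k, q k) * ∑ k, (√(p k) - √(q k)) ^ 2 := by
  have hfactor (k : κ) : |p k - q k| = |√(p k) - √(q k)| * (√(p k) + √(q k)) := by
    have hadd : 0 ≤ √(p k) + √(q k) := add_nonneg (Real.sqrt_nonneg _) (Real.sqrt_nonneg _)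
    rw [← abs_of_nonneg hadd, ← abs_mul, mul_comm, ← sq_sub_sq,
      Real.sq_sqrt (hp k), Real.sq_sqrt (hq k)]
  have hadd_sq : ∑ k, (√(p k) + √(q k)) ^ 2 ≤ 2 * (∑ k, p k + ∑ k, q k) := by
    rw [← Finset.sum_add_distrib, Finset.mul_sum]
    refine Finset.sum_le_sum fun k _ => ?_
    have hadd := add_sq_le (a := √(p k)) (b := √(q k))
    rwa [Real.sq_sqrt (hp k), Real.sq_sqrt (hq k)] at hadd
  calc (∑ k, |p k - q k|) ^ 2
      ≤ (∑ k, |√(p k) - √(q k)| ^ 2) * ∑ k, (√(p k) + √(q k)) ^ 2 := by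
        simp only [hfactor]
        exact Finset.sum_mul_sq_le_sq_mul_sq _ _ _
    _ ≤ 2 * (∑ k, p k + ∑ k, q k) * ∑ k, (√(p k) - √(q k)) ^ 2 := by
        simp only [sq_abs]
        rw [mul_comm]
        exact mul_le_mul_of_nonneg_right hadd_sq (Finset.sum_nonneg fun k _ => sq_nonneg _)

variable {n : Type*} [Fintype n] [DecidableEq n] {ρ σ : Matrix n n ℂ}

theorem IsSpectralDecomp.log_two_mul_relEnt_of_same_basis {U : Matrix n n ℂ} {p q : n → ℝ}
    (hρ : IsSpectralDecomp ρ U p) (hσ : IsSpectralDecomp σ U q) :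
    Real.log 2 * relEnt ρ σ = ∑ x, p x * (Real.log (p x) - Real.log (q x)) := by
  simp [hρ.log_two_mul_relEnt hσ, hσ.conjTranspose_mul_self, one_apply, apply_ite Complex.normSq]

theorem SuppLE.eq_zero_of_same_basis {U : Matrix n n ℂ} {p q : n → ℝ} (h : SuppLE ρ σ)
    (hρ : IsSpectralDecomp ρ U p) (hσ : IsSpectralDecomp σ U q) {x : n} (hx : q x = 0) :
    p x = 0 := by
  simpa [hσ.conjTranspose_mul_self] using h.overlap_mul_eq_zero hρ hσ hx x

theorem IsSpectralDecomp.sum_eq_one {U : Matrix n n ℂ} {p : n → ℝ} (h : IsSpectralDecomp ρ U p)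
    (htr : ρ.trace = 1) : ∑ x, p x = 1 := by
  exact_mod_cast h.trace_eq.symm.trans htr

theorem sq_sum_abs_sub_le_four_mul_relEnt {U : Matrix n n ℂ} {p q : n → ℝ} (hρ : IsDensity ρ)
    (hσ : IsDensity σ) (hsupp : SuppLE ρ σ) (dρ : IsSpectralDecomp ρ U p)
    (dσ : IsSpectralDecomp σ U q) : (∑ x, |p x - q x|) ^ 2 ≤ 4 * relEnt ρ σ := by
  have hp := dρ.nonneg hρ.1
  have hq := dσ.nonneg hσ.1
  have hp_sum := dρ.sum_eq_one hρ.2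
  have hq_sum := dσ.sum_eq_one hσ.2
  have hhellinger := sum_sq_sqrt_sub_sqrt_le_sum_mul_log hp hq
    (fun _ hx => hsupp.eq_zero_of_same_basis dρ dσ hx) (hp_sum.trans hq_sum.symm)
  rw [← dρ.log_two_mul_relEnt_of_same_basis dσ] at hhellinger
  have hrelEnt : 0 ≤ relEnt ρ σ := nonneg_of_mul_nonneg_right
    ((Finset.sum_nonneg fun x _ => sq_nonneg _).trans hhellinger) (Real.log_pos one_lt_two)
  have hlog : Real.log 2 ≤ 1 := (Real.log_le_sub_one_of_pos two_pos).trans (by norm_num)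
  have hcs := sq_sum_abs_sub_le_mul_sum_sq_sqrt_sub_sqrt hp hq
  rw [hp_sum, hq_sum] at hcs
  linarith [mul_le_mul_of_nonneg_right hlog hrelEnt]

theorem traceNorm_sub_sq_le_four_mul_relEnt (hρ : IsDensity ρ) (hσ : IsDensity σ)
    (hsupp : SuppLE ρ σ) : traceNorm (ρ - σ) ^ 2 ≤ 4 * relEnt ρ σ := by
  have hdiff := hρ.1.isHermitian.sub hσ.1.isHermitian
  have hδ := isSpectralDecomp_eigenvectorUnitary hdiff
  let Y := (hdiff.eigenvectorUnitary : Matrix n n ℂ)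
  have hK := (isProjMeasurement_basisProj hδ.mem_unitaryGroup).sum_conjTranspose_mul_self
  have heigenvalues (x : n) :
      hdiff.eigenvalues x = ((Yᴴ * ρ * Y) x x).re - ((Yᴴ * σ * Y) x x).re := by
    have h := congrFun₂ hδ.conjTranspose_mul_mul x x
    rw [diagonal_apply_eq, Matrix.mul_sub, Matrix.sub_mul, Matrix.sub_apply] at h
    rw [← Complex.sub_re, h, Complex.ofReal_re]
  calc traceNorm (ρ - σ) ^ 2
      = (∑ x, |((Yᴴ * ρ * Y) x x).re - ((Yᴴ * σ * Y) x x).re|) ^ 2 := by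
        simp only [traceNorm, dif_pos hdiff, heigenvalues]
    _ ≤ 4 * relEnt (krausMap (basisProj Y) ρ) (krausMap (basisProj Y) σ) :=
        sq_sum_abs_sub_le_four_mul_relEnt (hρ.krausMap hK) (hσ.krausMap hK)
          (hsupp.krausMap hρ.1 hσ.1)
          (isSpectralDecomp_krausMap_basisProj hδ.mem_unitaryGroup hρ.1.isHermitian)
          (isSpectralDecomp_krausMap_basisProj hδ.mem_unitaryGroup hσ.1.isHermitian)
    _ ≤ 4 * relEnt ρ σ := by
        linarith [relEnt_krausMap_le hK hρ.1 hσ.1 hsupp]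

end Pinsker

/-! ### Conditional entropy and strong subadditivity -/

section PartialTrace

variable {ι m p : Type*} [Fintype ι]

theorem krausMap_one_submatrix [Fintype p] [DecidableEq p] (f : ι → m → p) (M : Matrix p p ℂ) :
    krausMap (fun i => (1 : Matrix p p ℂ).submatrix (f i) id) M =
      ∑ i, M.submatrix (f i) (f i) := by
  refine Finset.sum_congr rfl fun i _ => ?_
  ext j k
  simp [Matrix.mul_apply, Matrix.one_apply]

variable [Fintype m]

theorem sum_one_submatrix_conjTranspose_mul_self [DecidableEq p] (φ : ι × m ≃ p) :
    ∑ i, ((1 : Matrix p p ℂ).submatrix (fun j => φ (i, j)) id)ᴴ *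
      (1 : Matrix p p ℂ).submatrix (fun j => φ (i, j)) id = 1 := by
  have := Fintype.ofEquiv (ι × m) φ
  ext k l
  have h := φ.sum_comp fun q => (1 : Matrix p p ℂ) q k * (1 : Matrix p p ℂ) q l
  simpa [Matrix.sum_apply, Matrix.mul_apply, Matrix.one_apply, Fintype.sum_prod_type, eq_comm]
    using h

theorem isDensity_sum_submatrix [Fintype p] (φ : ι × m ≃ p) {M : Matrix p p ℂ} (hM : IsDensity M) :
    IsDensity (∑ i, M.submatrix (fun j => φ (i, j)) (fun j => φ (i, j))) := by
  classical
  rw [← krausMap_one_submatrix]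
  exact hM.krausMap (sum_one_submatrix_conjTranspose_mul_self φ)

theorem relEnt_sum_submatrix_le [Fintype p] [DecidableEq p] [DecidableEq m] (φ : ι × m ≃ p)
    {ρ σ : Matrix p p ℂ} (hρ : ρ.PosSemidef) (hσ : σ.PosSemidef) (hsupp : SuppLE ρ σ) :
    relEnt (∑ i, ρ.submatrix (fun j => φ (i, j)) (fun j => φ (i, j)))
        (∑ i, σ.submatrix (fun j => φ (i, j)) (fun j => φ (i, j))) ≤ relEnt ρ σ := by
  rw [← krausMap_one_submatrix, ← krausMap_one_submatrix]
  exact relEnt_krausMap_le (sum_one_submatrix_conjTranspose_mul_self φ) hρ hσ hsupp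

end PartialTrace

section Bipartite

variable {a b : Type*} {M : Matrix (a × b) (a × b) ℂ}

theorem r2A_eq_sum_submatrix [Fintype b] (M : Matrix (a × b) (a × b) ℂ) :
    r2A M = ∑ y, M.submatrix (fun x => (x, y)) (fun x => (x, y)) := by
  ext
  simp [r2A, Matrix.sum_apply]

theorem r2B_eq_sum_submatrix [Fintype a] (M : Matrix (a × b) (a × b) ℂ) :
    r2B M = ∑ x, M.submatrix (fun y => (x, y)) (fun y => (x, y)) := by
  ext
  simp [r2B, Matrix.sum_apply]

theorem posSemidef_r2A [Fintype b] (hM : M.PosSemidef) : (r2A M).PosSemidef := by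
  rw [r2A_eq_sum_submatrix]
  exact posSemidef_sum _ fun y _ => hM.submatrix _

theorem posSemidef_r2B [Fintype a] (hM : M.PosSemidef) : (r2B M).PosSemidef := by
  rw [r2B_eq_sum_submatrix]
  exact posSemidef_sum _ fun x _ => hM.submatrix _

variable [Fintype a] [Fintype b]

theorem trace_mul_kronecker_one [DecidableEq b] (M : Matrix (a × b) (a × b) ℂ) (X : Matrix a a ℂ) :
    (M * X ⊗ₖ (1 : Matrix b b ℂ)).trace = (r2A M * X).trace := by
  simp only [trace, diag_apply, Matrix.mul_apply, Fintype.sum_prod_type, kroneckerMap_apply,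
    one_apply, r2A, of_apply, Finset.sum_mul, mul_ite, mul_one, mul_zero, Finset.sum_ite_eq',
    Finset.mem_univ, if_true]
  exact Finset.sum_congr rfl fun x _ => Finset.sum_comm

theorem trace_mul_one_kronecker [DecidableEq a] (M : Matrix (a × b) (a × b) ℂ) (X : Matrix b b ℂ) :
    (M * (1 : Matrix a a ℂ) ⊗ₖ X).trace = (r2B M * X).trace := by
  simp only [trace, diag_apply, Matrix.mul_apply, Fintype.sum_prod_type_right, kroneckerMap_apply,
    one_apply, r2B, of_apply, Finset.sum_mul, ite_mul, one_mul, zero_mul, mul_ite, mul_zero,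
    Finset.sum_ite_eq', Finset.mem_univ, if_true]
  exact Finset.sum_congr rfl fun x _ => Finset.sum_comm

theorem trace_r2A (M : Matrix (a × b) (a × b) ℂ) : (r2A M).trace = M.trace := by
  classical
  simpa using (trace_mul_kronecker_one M 1).symm

theorem trace_r2B (M : Matrix (a × b) (a × b) ℂ) : (r2B M).trace = M.trace := by
  classical
  simpa using (trace_mul_one_kronecker M 1).symm

theorem IsDensity.r2A (hM : IsDensity M) : IsDensity (r2A M) :=
  ⟨posSemidef_r2A hM.1, (trace_r2A M).trans hM.2⟩

theorem IsDensity.r2B (hM : IsDensity M) : IsDensity (_root_.r2B M) :=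
  ⟨posSemidef_r2B hM.1, (trace_r2B M).trans hM.2⟩

theorem IsDensity.kronecker {α : Matrix a a ℂ} {β : Matrix b b ℂ} (hα : IsDensity α)
    (hβ : IsDensity β) : IsDensity (α ⊗ₖ β) :=
  ⟨hα.1.kronecker hβ.1, by rw [trace_kronecker, hα.2, hβ.2, one_mul]⟩

variable [DecidableEq a] [DecidableEq b]

theorem r2B_krausMap_kronecker_one {ι : Type*} [Fintype ι] {K : ι → Matrix a a ℂ}
    (hK : ∑ i, (K i)ᴴ * K i = 1) (M : Matrix (a × b) (a × b) ℂ) :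
    r2B (krausMap (fun i => K i ⊗ₖ (1 : Matrix b b ℂ)) M) = r2B M := by
  refine ext_iff_trace_mul_right.2 fun X => ?_
  rw [← trace_mul_one_kronecker, trace_krausMap_mul, ← trace_mul_one_kronecker]
  have hkraus : krausMap (fun i => (K i ⊗ₖ (1 : Matrix b b ℂ))ᴴ) (1 ⊗ₖ X) = 1 ⊗ₖ X := by
    simp only [krausMap, conjTranspose_conjTranspose, conjTranspose_kronecker, conjTranspose_one,
      ← mul_kronecker_mul, Matrix.mul_one, Matrix.one_mul]
    rw [← hK]
    ext
    simp [Matrix.sum_apply, Finset.sum_mul]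
  rw [hkraus]

theorem krausMap_single_kronecker_one (M : Matrix (a × b) (a × b) ℂ) :
    krausMap (fun p : a × a => single p.1 p.2 (1 : ℂ) ⊗ₖ (1 : Matrix b b ℂ)) M = 1 ⊗ₖ r2B M := by
  simp only [krausMap, conjTranspose_kronecker, conjTranspose_single, conjTranspose_one, star_one]
  ext ⟨i, k⟩ ⟨j, l⟩
  simp [Matrix.sum_apply, Matrix.mul_apply, Fintype.sum_prod_type, r2B, single_apply, one_apply,
    ite_and, eq_comm]

theorem krausMap_mul_single_mul_kronecker_one {F G : Matrix a a ℂ} (hF : F ∈ unitaryGroup a ℂ)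
    (hG : G ∈ unitaryGroup a ℂ) (M : Matrix (a × b) (a × b) ℂ) :
    krausMap (fun p : a × a => (F * single p.1 p.2 1 * Gᴴ) ⊗ₖ (1 : Matrix b b ℂ)) M =
      1 ⊗ₖ r2B M := by
  have hFF : F * Fᴴ = 1 := mem_unitaryGroup_iff.1 hF
  have hGG : Gᴴᴴ * Gᴴ = 1 := by rw [conjTranspose_conjTranspose]; exact mem_unitaryGroup_iff.1 hG
  have hfactor (p : a × a) : (F * single p.1 p.2 1 * Gᴴ) ⊗ₖ (1 : Matrix b b ℂ) =
      F ⊗ₖ 1 * single p.1 p.2 1 ⊗ₖ 1 * Gᴴ ⊗ₖ 1 := by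
    simp only [← mul_kronecker_mul, Matrix.mul_one]
  have hr2B : r2B (Gᴴ ⊗ₖ (1 : Matrix b b ℂ) * M * (Gᴴ ⊗ₖ (1 : Matrix b b ℂ))ᴴ) = r2B M := by
    simpa [krausMap] using
      r2B_krausMap_kronecker_one (K := fun _ : Unit => Gᴴ) (by simpa using hGG) M
  calc krausMap (fun p : a × a => (F * single p.1 p.2 1 * Gᴴ) ⊗ₖ (1 : Matrix b b ℂ)) M
      = F ⊗ₖ 1 * krausMap (fun p : a × a => single p.1 p.2 (1 : ℂ) ⊗ₖ (1 : Matrix b b ℂ))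
          (Gᴴ ⊗ₖ 1 * M * (Gᴴ ⊗ₖ 1)ᴴ) * (F ⊗ₖ 1)ᴴ := by
        simp only [hfactor]
        simp only [krausMap, conjTranspose_mul, Matrix.mul_assoc, Finset.mul_sum,
          Finset.sum_mul]
    _ = 1 ⊗ₖ r2B M := by
        rw [krausMap_single_kronecker_one, hr2B, conjTranspose_kronecker, ← mul_kronecker_mul,
          ← mul_kronecker_mul, Matrix.mul_one, hFF, conjTranspose_one, Matrix.one_mul,
          Matrix.mul_one]

theorem krausMap_one_kronecker_single (M : Matrix (a × b) (a × b) ℂ) :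
    krausMap (fun p : b × b => (1 : Matrix a a ℂ) ⊗ₖ single p.1 p.2 (1 : ℂ)) M = r2A M ⊗ₖ 1 := by
  simp only [krausMap, conjTranspose_kronecker, conjTranspose_single, conjTranspose_one, star_one]
  ext ⟨i, k⟩ ⟨j, l⟩
  simp [Matrix.sum_apply, Matrix.mul_apply, Fintype.sum_prod_type, r2A, single_apply, one_apply,
    ite_and, eq_comm]

end Bipartite

section ProductSupport

variable {a b : Type*} [Fintype a] [Fintype b] {M : Matrix (a × b) (a × b) ℂ}

theorem suppLE_one_kronecker_r2B [DecidableEq a] (hM : M.PosSemidef) :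
    SuppLE M ((1 : Matrix a a ℂ) ⊗ₖ r2B M) := by
  classical
  rw [← krausMap_single_kronecker_one]
  refine suppLE_krausMap_self hM (fun p => if p.1 = p.2 then 1 else 0) ?_
  simp only [Fintype.sum_prod_type, ite_smul, one_smul, zero_smul, Finset.sum_ite_eq,
    Finset.mem_univ, if_true, conjTranspose_kronecker, conjTranspose_single, conjTranspose_one,
    star_one]
  ext ⟨i, k⟩ ⟨j, l⟩
  by_cases hkl : k = l <;> simp [Matrix.sum_apply, single_apply, one_apply, ite_and, hkl]

theorem suppLE_r2A_kronecker_one [DecidableEq b] (hM : M.PosSemidef) :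
    SuppLE M (r2A M ⊗ₖ (1 : Matrix b b ℂ)) := by
  classical
  rw [← krausMap_one_kronecker_single]
  refine suppLE_krausMap_self hM (fun p => if p.1 = p.2 then 1 else 0) ?_
  simp only [Fintype.sum_prod_type, ite_smul, one_smul, zero_smul, Finset.sum_ite_eq,
    Finset.mem_univ, if_true, conjTranspose_kronecker, conjTranspose_single, conjTranspose_one,
    star_one]
  ext ⟨i, k⟩ ⟨j, l⟩
  by_cases hkl : k = l <;> simp [Matrix.sum_apply, single_apply, one_apply, ite_and, hkl]

theorem suppLE_r2A_kronecker_r2B (hM : M.PosSemidef) : SuppLE M (r2A M ⊗ₖ r2B M) := by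
  classical
  obtain ⟨U, l, dA⟩ := exists_isSpectralDecomp (posSemidef_r2A hM).isHermitian
  obtain ⟨V, μ, dB⟩ := exists_isSpectralDecomp (posSemidef_r2B hM).isHermitian
  refine (dA.kronecker dB).suppLE_of_mul_apply_eq_zero fun p hp i => ?_
  rcases mul_eq_zero.1 hp with hl | hμ
  · exact (suppLE_r2A_kronecker_one hM).mul_apply_eq_zero
      (dA.kronecker (IsSpectralDecomp.one dB.mem_unitaryGroup)) (by rw [hl, zero_mul]) i
  · exact (suppLE_one_kronecker_r2B hM).mul_apply_eq_zero
      ((IsSpectralDecomp.one dA.mem_unitaryGroup).kronecker dB) (by rw [hμ, mul_zero]) i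

end ProductSupport

section RelEntProduct

variable {a b : Type*} [Fintype a] [Fintype b] [DecidableEq a] [DecidableEq b]
  {M : Matrix (a × b) (a × b) ℂ}

theorem IsSpectralDecomp.mul_conj_diagonal_congr {n : Type*} [Fintype n] [DecidableEq n]
    {ρ σ V : Matrix n n ℂ} {μ : n → ℝ} (hσ : IsSpectralDecomp σ V μ) (h : SuppLE ρ σ)
    {f g : n → ℂ} (hfg : ∀ j, μ j ≠ 0 → f j = g j) :
    ρ * (V * diagonal f * Vᴴ) = ρ * (V * diagonal g * Vᴴ) := by
  have hdiag : ρ * V * diagonal f = ρ * V * diagonal g := by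
    ext i j
    rw [mul_diagonal, mul_diagonal]
    rcases eq_or_ne (μ j) 0 with hj | hj
    · rw [h.mul_apply_eq_zero hσ hj, zero_mul, zero_mul]
    · rw [hfg j hj]
  rw [← Matrix.mul_assoc, ← Matrix.mul_assoc, hdiag, Matrix.mul_assoc, Matrix.mul_assoc,
    Matrix.mul_assoc]

theorem mul_mlog_kronecker {α : Matrix a a ℂ} {β : Matrix b b ℂ} (hα : α.IsHermitian)
    (hβ : β.IsHermitian) (hM : SuppLE M (α ⊗ₖ β)) :
    M * mlog (α ⊗ₖ β) = M * (mlog α ⊗ₖ 1 + 1 ⊗ₖ mlog β) := by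
  obtain ⟨U, l, dα⟩ := exists_isSpectralDecomp hα
  obtain ⟨V, μ, dβ⟩ := exists_isSpectralDecomp hβ
  have dα₁ := dα.mlog.kronecker (IsSpectralDecomp.one dβ.mem_unitaryGroup)
  have dβ₁ := (IsSpectralDecomp.one dα.mem_unitaryGroup).kronecker dβ.mlog
  rw [(dα.kronecker dβ).mlog.eq, dα₁.eq, dβ₁.eq, ← Matrix.add_mul, ← Matrix.mul_add, diagonal_add]
  refine (dα.kronecker dβ).mul_conj_diagonal_congr hM fun p hp => ?_
  rw [Real.logb_mul (left_ne_zero_of_mul hp) (right_ne_zero_of_mul hp), mul_one, one_mul,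
    Complex.ofReal_add]

theorem relEnt_kronecker {α : Matrix a a ℂ} {β : Matrix b b ℂ} (hM : M.IsHermitian)
    (hα : α.IsHermitian) (hβ : β.IsHermitian) (hsupp : SuppLE M (α ⊗ₖ β)) :
    relEnt M (α ⊗ₖ β) = -vN M - (r2A M * mlog α).trace.re - (r2B M * mlog β).trace.re := by
  rw [relEnt_eq_neg_vN_sub hM, mul_mlog_kronecker hα hβ hsupp, Matrix.mul_add, trace_add,
    trace_mul_kronecker_one, trace_mul_one_kronecker, Complex.add_re]
  ring

/-- The conditional entropy `S(A|B) = S(AB) - S(B)` of a bipartite state on `A ⊗ B`. -/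
def condEntropy (M : Matrix (a × b) (a × b) ℂ) : ℝ :=
  vN M - vN (r2B M)

theorem relEnt_smul_one_kronecker_r2B (hM : M.PosSemidef) {c : ℝ} (hc : 0 < c) :
    relEnt M ((c : ℂ) • (1 : Matrix a a ℂ) ⊗ₖ r2B M) =
      -condEntropy M - Real.logb 2 c * M.trace.re := by
  have hB := (posSemidef_r2B hM).isHermitian
  have hsupp : SuppLE M (((c : ℂ) • (1 : Matrix a a ℂ)) ⊗ₖ r2B M) := by
    intro v hv
    rw [smul_kronecker, smul_mulVec, smul_eq_zero_iff_right (by exact_mod_cast hc.ne')] at hv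
    exact suppLE_one_kronecker_r2B hM v hv
  rw [← smul_kronecker, relEnt_kronecker hM.isHermitian
    (isSpectralDecomp_real_smul_one c).isHermitian hB hsupp, condEntropy,
    vN_eq_neg_trace hB, mlog_real_smul_one, Matrix.mul_smul, Matrix.mul_one, trace_smul,
    smul_eq_mul, trace_r2A, Complex.re_ofReal_mul]
  ring

theorem relEnt_one_kronecker_r2B (hM : M.PosSemidef) :
    relEnt M ((1 : Matrix a a ℂ) ⊗ₖ r2B M) = -condEntropy M := by
  simpa using relEnt_smul_one_kronecker_r2B hM one_pos

theorem relEnt_r2A_kronecker_r2B (hM : M.PosSemidef) :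
    relEnt M (r2A M ⊗ₖ r2B M) = vN (r2A M) - condEntropy M := by
  have hA := (posSemidef_r2A hM).isHermitian
  have hB := (posSemidef_r2B hM).isHermitian
  rw [relEnt_kronecker hM.isHermitian hA hB (suppLE_r2A_kronecker_r2B hM), vN_eq_neg_trace hA,
    condEntropy, vN_eq_neg_trace hB]
  ring

theorem traceNorm_sub_r2A_kronecker_r2B_sq_le (hM : IsDensity M) :
    traceNorm (M - r2A M ⊗ₖ r2B M) ^ 2 ≤ 4 * (vN (r2A M) - condEntropy M) := by
  rw [← relEnt_r2A_kronecker_r2B hM.1]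
  exact traceNorm_sub_sq_le_four_mul_relEnt hM (hM.r2A.kronecker hM.r2B)
    (suppLE_r2A_kronecker_r2B hM.1)

end RelEntProduct

section Tripartite

variable {a b e : Type*}

theorem rAB_eq_sum_submatrix [Fintype e] (M : Matrix (a × b × e) (a × b × e) ℂ) :
    rAB M = ∑ z, M.submatrix (fun p => (p.1, p.2, z)) (fun p => (p.1, p.2, z)) := by
  ext
  simp [rAB, Matrix.sum_apply]

theorem rAE_eq_sum_submatrix [Fintype b] (M : Matrix (a × b × e) (a × b × e) ℂ) :
    rAE M = ∑ y, M.submatrix (fun p => (p.1, y, p.2)) (fun p => (p.1, y, p.2)) := by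
  ext
  simp [rAE, Matrix.sum_apply]

theorem r2A_rAE [Fintype b] [Fintype e] (M : Matrix (a × b × e) (a × b × e) ℂ) :
    r2A (rAE M) = rA M := by
  ext i j
  simp only [rA, r2A, rAE, of_apply]
  exact Finset.sum_comm

theorem rAB_one_kronecker [DecidableEq a] [Fintype e] (M : Matrix (b × e) (b × e) ℂ) :
    rAB ((1 : Matrix a a ℂ) ⊗ₖ M) = 1 ⊗ₖ r2A M := by
  ext
  simp only [rAB, r2A, of_apply, kroneckerMap_apply, Finset.mul_sum]

theorem r2A_r2B [Fintype a] [Fintype e] (M : Matrix (a × b × e) (a × b × e) ℂ) :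
    r2A (r2B M) = r2B (rAB M) := by
  ext i j
  simp only [rAB, r2A, r2B, of_apply]
  exact Finset.sum_comm

variable [Fintype a] [Fintype b] [Fintype e] {ρ : Matrix (a × b × e) (a × b × e) ℂ}

theorem IsDensity.rAB (hρ : IsDensity ρ) : IsDensity (rAB ρ) := by
  rw [rAB_eq_sum_submatrix]
  exact isDensity_sum_submatrix ((Equiv.prodComm e (a × b)).trans (Equiv.prodAssoc a b e)) hρ

theorem IsDensity.rAE (hρ : IsDensity ρ) : IsDensity (_root_.rAE ρ) := by
  rw [rAE_eq_sum_submatrix]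
  let φ : b × a × e ≃ a × b × e :=
    ⟨fun p => (p.2.1, p.1, p.2.2), fun q => (q.2.1, q.1, q.2.2), fun _ => rfl, fun _ => rfl⟩
  exact isDensity_sum_submatrix φ hρ

variable [DecidableEq a] [DecidableEq b] [DecidableEq e]

theorem condEntropy_le_condEntropy_rAB (hρ : ρ.PosSemidef) :
    condEntropy ρ ≤ condEntropy (rAB ρ) := by
  have hdata : relEnt (rAB ρ) (rAB ((1 : Matrix a a ℂ) ⊗ₖ r2B ρ)) ≤ relEnt ρ (1 ⊗ₖ r2B ρ) := by
    rw [rAB_eq_sum_submatrix, rAB_eq_sum_submatrix]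
    exact relEnt_sum_submatrix_le ((Equiv.prodComm e (a × b)).trans (Equiv.prodAssoc a b e)) hρ
      (PosSemidef.one.kronecker (posSemidef_r2B hρ)) (suppLE_one_kronecker_r2B hρ)
  have hrAB : (rAB ρ).PosSemidef := by
    rw [rAB_eq_sum_submatrix]
    exact posSemidef_sum _ fun z _ => hρ.submatrix _
  rw [rAB_one_kronecker, r2A_r2B, relEnt_one_kronecker_r2B hrAB, relEnt_one_kronecker_r2B hρ]
    at hdata
  exact neg_le_neg_iff.1 hdata

end Tripartite

section Duality

variable {a b r : Type*} [Fintype b]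

/-- The marginal on `A ⊗ R` of the pure vector `∑ K (x, y) z |x, y, z⟩` on `A ⊗ B ⊗ R`, whose
marginal on `A ⊗ B` is `K * Kᴴ`. -/
def complMarginal (K : Matrix (a × b) r ℂ) : Matrix (a × r) (a × r) ℂ :=
  of fun p q => ∑ y, K (p.1, y) p.2 * star (K (q.1, y) q.2)

theorem complMarginal_eq_transpose (K : Matrix (a × b) r ℂ) :
    complMarginal K = ((of fun y p => K (p.1, y) p.2 : Matrix b (a × r) ℂ)ᴴ *
      of fun y p => K (p.1, y) p.2)ᵀ := by
  ext p q
  simp only [complMarginal, transpose_apply, Matrix.mul_apply, conjTranspose_apply, of_apply,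
    mul_comm]

theorem posSemidef_complMarginal [Finite a] [Finite r] (K : Matrix (a × b) r ℂ) :
    (complMarginal K).PosSemidef := by
  rw [complMarginal_eq_transpose]
  exact (posSemidef_conjTranspose_mul_self _).transpose

variable [Fintype a] [Fintype r] [DecidableEq a] [DecidableEq b] [DecidableEq r]

theorem condEntropy_complMarginal (K : Matrix (a × b) r ℂ) :
    condEntropy (complMarginal K) = -condEntropy (K * Kᴴ) := by
  let N : Matrix b (a × r) ℂ := of fun y p => K (p.1, y) p.2
  have hB : r2B (K * Kᴴ) = N * Nᴴ := by
    ext y y'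
    simp only [r2B, N, Matrix.mul_apply, conjTranspose_apply, of_apply, Fintype.sum_prod_type]
  have hR : r2B (complMarginal K) = (Kᴴ * K)ᵀ := by
    ext z z'
    simp only [r2B, complMarginal, transpose_apply, Matrix.mul_apply, conjTranspose_apply, of_apply,
      Fintype.sum_prod_type, mul_comm]
  rw [condEntropy, condEntropy, hR, hB, complMarginal_eq_transpose,
    vN_transpose_conjTranspose_mul_self, vN_transpose_conjTranspose_mul_self, neg_sub]

end Duality

section StrongSubadditivity

variable {a b e : Type*} [Fintype a] [Fintype b] [Fintype e] [DecidableEq a] [DecidableEq b]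
  [DecidableEq e]

theorem condEntropy_rAB_add_condEntropy_rAE_nonneg {ρ : Matrix (a × b × e) (a × b × e) ℂ}
    (hρ : ρ.PosSemidef) : 0 ≤ condEntropy (rAB ρ) + condEntropy (rAE ρ) := by
  obtain ⟨L, rfl⟩ := exists_eq_mul_conjTranspose hρ
  -- The tensor `L` is a purification of `ρ` with reference system `A ⊗ B ⊗ E`.
  let K : Matrix (a × b) (e × a × b × e) ℂ := of fun p q => L (p.1, p.2, q.1) q.2
  have hAB : K * Kᴴ = rAB (L * Lᴴ) := by
    ext p q
    simp only [K, rAB, Matrix.mul_apply, conjTranspose_apply, of_apply, Fintype.sum_prod_type]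
  have hAE : rAB (complMarginal K) = rAE (L * Lᴴ) := by
    ext p q
    simp only [K, rAB, rAE, complMarginal, Matrix.mul_apply, conjTranspose_apply, of_apply]
    exact Finset.sum_comm
  have hmono := condEntropy_le_condEntropy_rAB (posSemidef_complMarginal K)
  rw [condEntropy_complMarginal, hAB, hAE] at hmono
  linarith

end StrongSubadditivity

/-! ### Entropic uncertainty and decoupling -/

section KrausMapAlgebra

variable {ι κ n m p : Type*} [Fintype ι] [Fintype κ] [Fintype n]

theorem krausMap_krausMap [Fintype m] (K : ι → Matrix p m ℂ) (L : κ → Matrix m n ℂ)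
    (M : Matrix n n ℂ) :
    krausMap K (krausMap L M) = krausMap (fun x : ι × κ => K x.1 * L x.2) M := by
  simp only [krausMap, Fintype.sum_prod_type, conjTranspose_mul, Matrix.mul_sum,
    Matrix.sum_mul, Matrix.mul_assoc]

theorem posSemidef_smul_krausMap_sub [Finite m] {M : Matrix n n ℂ} (hM : M.PosSemidef)
    (K : ι → Matrix m n ℂ) {w : ι → ℂ} {c : ℝ} (hw : ∀ i, Complex.normSq (w i) ≤ c) :
    ((c : ℂ) • krausMap K M - krausMap (fun i => w i • K i) M).PosSemidef := by
  have hterm (i : ι) : w i • K i * M * (w i • K i)ᴴ =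
      (Complex.normSq (w i) : ℂ) • (K i * M * (K i)ᴴ) := by
    rw [conjTranspose_smul, Matrix.smul_mul, Matrix.smul_mul, Matrix.mul_smul, smul_smul,
      Complex.star_def, Complex.mul_conj]
  simp only [krausMap, hterm, Finset.smul_sum, ← Finset.sum_sub_distrib, ← sub_smul]
  refine posSemidef_sum _ fun i _ => (hM.mul_mul_conjTranspose_same (K i)).smul ?_
  exact_mod_cast sub_nonneg.2 (hw i)

end KrausMapAlgebra

section Dephasing

variable {a b : Type*} [Fintype a] [Fintype b] [DecidableEq a] [DecidableEq b]

theorem IsProjMeasurement.kronecker_one {ι : Type*} [Fintype ι] {P : ι → Matrix a a ℂ}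
    (hP : IsProjMeasurement P) : IsProjMeasurement fun x => P x ⊗ₖ (1 : Matrix b b ℂ) where
  idem x := by
    rw [IsIdempotentElem, ← mul_kronecker_mul, (hP.idem x).eq, Matrix.mul_one]
  ortho x y hxy := by
    change P x ⊗ₖ (1 : Matrix b b ℂ) * P y ⊗ₖ 1 = 0
    rw [← mul_kronecker_mul, hP.ortho hxy, zero_kronecker]
  complete := by
    ext
    simp only [Matrix.sum_apply, kroneckerMap_apply, ← Finset.sum_mul]
    rw [← Matrix.sum_apply, hP.complete, ← one_kronecker_one, kroneckerMap_apply]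
  isHermitian x := by
    rw [IsHermitian, conjTranspose_kronecker, (hP.isHermitian x).eq, conjTranspose_one]

/-- Complete dephasing of the factor `A` of `A ⊗ B` in the orthonormal basis of the columns of `F`.
The paper's `S(O^A|B)` is `condEntropy (dephaseIn F ρ)`, for `F` an eigenbasis of `O`. -/
def dephaseIn (F : Matrix a a ℂ) (M : Matrix (a × b) (a × b) ℂ) : Matrix (a × b) (a × b) ℂ :=
  krausMap (fun x => basisProj F x ⊗ₖ (1 : Matrix b b ℂ)) M

theorem dephaseIn_one (M : Matrix (a × b) (a × b) ℂ) : dephaseIn 1 M = dephaseA M := by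
  simp only [dephaseIn, krausMap, basisProj, conjTranspose_kronecker, conjTranspose_one,
    Matrix.one_mul, Matrix.mul_one, conjTranspose_single, star_one]
  ext ⟨i, k⟩ ⟨j, l⟩
  rcases eq_or_ne i j with rfl | hij
  · simp [dephaseA, Matrix.sum_apply, Matrix.mul_apply, Fintype.sum_prod_type, single_apply,
      one_apply, ite_and]
  · simp [hij, hij.symm, dephaseA, Matrix.sum_apply, Matrix.mul_apply, Fintype.sum_prod_type,
      single_apply, one_apply, ite_and]

theorem dephaseIn_eq_conj (F : Matrix a a ℂ) (M : Matrix (a × b) (a × b) ℂ) :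
    dephaseIn F M = F ⊗ₖ 1 * dephaseA ((F ⊗ₖ 1)ᴴ * M * F ⊗ₖ 1) * (F ⊗ₖ 1)ᴴ := by
  have hfactor (x : a) : basisProj F x ⊗ₖ (1 : Matrix b b ℂ) =
      F ⊗ₖ 1 * basisProj 1 x ⊗ₖ 1 * (F ⊗ₖ 1)ᴴ := by
    simp only [basisProj, conjTranspose_kronecker, conjTranspose_one, ← mul_kronecker_mul,
      Matrix.one_mul, Matrix.mul_one]
  simp only [← dephaseIn_one, dephaseIn, krausMap, hfactor, conjTranspose_mul,
    conjTranspose_conjTranspose, Finset.mul_sum, Finset.sum_mul, Matrix.mul_assoc]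

theorem dephaseIn_fourierMat (d : ℕ) (M : Matrix (Fin d × b) (Fin d × b) ℂ) :
    dephaseIn (fourierMat d) M = dephaseXA d M :=
  dephaseIn_eq_conj _ M

theorem dephaseIn_dephaseIn (F G : Matrix a a ℂ) (M : Matrix (a × b) (a × b) ℂ) :
    dephaseIn F (dephaseIn G M) = krausMap (fun p : a × a =>
      (Fᴴ * G) p.1 p.2 • ((F * single p.1 p.2 1 * Gᴴ) ⊗ₖ (1 : Matrix b b ℂ))) M := by
  simp only [dephaseIn, krausMap_krausMap, ← mul_kronecker_mul, basisProj_mul_basisProj,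
    Matrix.one_mul, smul_kronecker]

variable {F G : Matrix a a ℂ}

theorem posSemidef_smul_one_kronecker_r2B_sub_dephaseIn (hF : F ∈ unitaryGroup a ℂ)
    (hG : G ∈ unitaryGroup a ℂ) {c : ℝ} (hc : ∀ x y, Complex.normSq ((Fᴴ * G) x y) ≤ c)
    {M : Matrix (a × b) (a × b) ℂ} (hM : M.PosSemidef) :
    ((c : ℂ) • (1 : Matrix a a ℂ) ⊗ₖ r2B M - dephaseIn F (dephaseIn G M)).PosSemidef := by
  rw [dephaseIn_dephaseIn, ← krausMap_mul_single_mul_kronecker_one hF hG]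
  exact posSemidef_smul_krausMap_sub hM _ fun p => hc p.1 p.2

theorem r2B_dephaseIn (hF : F ∈ unitaryGroup a ℂ) (M : Matrix (a × b) (a × b) ℂ) :
    r2B (dephaseIn F M) = r2B M :=
  r2B_krausMap_kronecker_one (isProjMeasurement_basisProj hF).sum_conjTranspose_mul_self M

theorem condEntropy_dephaseIn_one (M : Matrix (a × b) (a × b) ℂ) :
    condEntropy (dephaseIn 1 M) = vN (dephaseA M) - vN (r2B M) := by
  rw [condEntropy, r2B_dephaseIn (one_mem _), dephaseIn_one]

theorem relEnt_dephaseIn (hF : F ∈ unitaryGroup a ℂ) {M : Matrix (a × b) (a × b) ℂ}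
    (hM : M.PosSemidef) :
    relEnt M (dephaseIn F M) = condEntropy (dephaseIn F M) - condEntropy M := by
  rw [condEntropy, condEntropy, r2B_dephaseIn hF, sub_sub_sub_cancel_right]
  exact (isProjMeasurement_basisProj hF).kronecker_one.relEnt_krausMap hM

theorem condEntropy_sub_logb_le_condEntropy_dephaseIn (hF : F ∈ unitaryGroup a ℂ)
    (hG : G ∈ unitaryGroup a ℂ) {c : ℝ} (hc₀ : 0 < c)
    (hc : ∀ x y, Complex.normSq ((Fᴴ * G) x y) ≤ c) {R : Matrix (a × b) (a × b) ℂ}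
    (hR : IsDensity R) :
    condEntropy R - Real.logb 2 c ≤ condEntropy (dephaseIn F R) + condEntropy (dephaseIn G R) := by
  have hP := (isProjMeasurement_basisProj hF).kronecker_one (b := b)
  have hQ := (isProjMeasurement_basisProj hG).kronecker_one (b := b)
  have hFR : IsDensity (dephaseIn F R) := hR.krausMap hP.sum_conjTranspose_mul_self
  have hGR : IsDensity (dephaseIn G R) := hR.krausMap hQ.sum_conjTranspose_mul_self
  have hσ : ((c : ℂ) • (1 : Matrix a a ℂ) ⊗ₖ r2B R).PosSemidef :=
    (PosSemidef.one.kronecker (posSemidef_r2B hR.1)).smul (by exact_mod_cast hc₀.le)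
  have hsupp : SuppLE R (dephaseIn G R) := hQ.suppLE_krausMap hR.1
  have hchain : -condEntropy (dephaseIn F R) - Real.logb 2 c ≤
      condEntropy (dephaseIn G R) - condEntropy R := by
    calc -condEntropy (dephaseIn F R) - Real.logb 2 c
        = relEnt (dephaseIn F R) ((c : ℂ) • (1 : Matrix a a ℂ) ⊗ₖ r2B R) := by
          have h := relEnt_smul_one_kronecker_r2B hFR.1 hc₀
          rwa [r2B_dephaseIn hF, hFR.2, Complex.one_re, mul_one, eq_comm] at h
      _ ≤ relEnt (dephaseIn F R) (dephaseIn F (dephaseIn G R)) :=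
          relEnt_anti_right hFR.1 (posSemidef_krausMap _ hGR.1) hσ
            (posSemidef_smul_one_kronecker_r2B_sub_dephaseIn hF hG hc hR.1)
            (hsupp.krausMap hR.1 hGR.1)
      _ ≤ relEnt R (dephaseIn G R) :=
          relEnt_krausMap_le hP.sum_conjTranspose_mul_self hR.1 hGR.1 hsupp
      _ = condEntropy (dephaseIn G R) - condEntropy R := relEnt_dephaseIn hG hR.1
  linarith

end Dephasing

section Fourier

theorem star_qomega (d : ℕ) : star (qomega d) = (qomega d)⁻¹ := by
  rw [qomega, Complex.star_def, ← Complex.exp_conj, ← Complex.exp_neg]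
  congr 1
  simp [neg_div, map_ofNat]

theorem fourierMat_apply_mul_star (d : ℕ) (i j k l : Fin d) :
    star (fourierMat d k i) * fourierMat d l j =
      (qomega d)⁻¹ ^ ((i : ℕ) * k) * qomega d ^ ((j : ℕ) * l) / d := by
  have hsqrt : (√d : ℂ) * √d = d := by
    exact_mod_cast Real.mul_self_sqrt (Nat.cast_nonneg d)
  simp only [fourierMat, of_apply, star_div₀, star_pow, star_qomega, Complex.star_def,
    Complex.conj_ofReal, div_mul_div_comm, hsqrt]

theorem normSq_fourierMat_apply (d : ℕ) (i j : Fin d) :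
    Complex.normSq (fourierMat d i j) = 1 / d := by
  have hω₀ : qomega d ≠ 0 := Complex.exp_ne_zero _
  apply Complex.ofReal_injective
  rw [Complex.normSq_eq_conj_mul_self, ← Complex.star_def, fourierMat_apply_mul_star, ← mul_pow,
    inv_mul_cancel₀ hω₀, one_pow, Complex.ofReal_div, Complex.ofReal_one, Complex.ofReal_natCast]

theorem fourierMat_mem_unitaryGroup (d : ℕ) [NeZero d] :
    fourierMat d ∈ unitaryGroup (Fin d) ℂ := by
  have hω : IsPrimitiveRoot (qomega d) d := Complex.isPrimitiveRoot_exp d (NeZero.ne d)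
  have hω₀ : qomega d ≠ 0 := hω.ne_zero (NeZero.ne d)
  rw [mem_unitaryGroup_iff']
  ext i j
  set z := (qomega d)⁻¹ ^ (i : ℕ) * qomega d ^ (j : ℕ) with hz
  have hentry : (star (fourierMat d) * fourierMat d) i j = (∑ k ∈ Finset.range d, z ^ k) / d := by
    rw [← Fin.sum_univ_eq_sum_range, Finset.sum_div, Matrix.mul_apply]
    refine Finset.sum_congr rfl fun k _ => ?_
    rw [star_apply, fourierMat_apply_mul_star, hz, mul_pow, ← pow_mul, ← pow_mul]
  rw [hentry]
  rcases eq_or_ne i j with rfl | hij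
  · have hz₁ : z = 1 := by rw [hz, ← mul_pow, inv_mul_cancel₀ hω₀, one_pow]
    simp [hz₁]
  · have hz₁ : z ≠ 1 := by
      rw [hz, inv_pow, Ne, inv_mul_eq_one₀ (pow_ne_zero _ hω₀)]
      exact fun h => hij (Fin.ext (hω.pow_inj i.2 j.2 h))
    have hzd : z ^ d = 1 := by
      rw [hz, mul_pow, pow_right_comm, pow_right_comm (qomega d), inv_pow, hω.pow_eq_one, inv_one,
        one_pow, one_pow, one_mul]
    rw [geom_sum_eq hz₁, hzd, sub_self, zero_div, zero_div, one_apply_ne hij]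

theorem condEntropy_dephaseIn_fourierMat {b : Type*} [Fintype b] [DecidableEq b] (d : ℕ) [NeZero d]
    (M : Matrix (Fin d × b) (Fin d × b) ℂ) :
    condEntropy (dephaseIn (fourierMat d) M) = vN (dephaseXA d M) - vN (r2B M) := by
  rw [condEntropy, r2B_dephaseIn (fourierMat_mem_unitaryGroup d), dephaseIn_fourierMat]

end Fourier

theorem decoupling_general {a b e : Type*} [Fintype a] [DecidableEq a] [Fintype b] [DecidableEq b]
    [Fintype e] [DecidableEq e] {F G : Matrix a a ℂ} (hF : F ∈ unitaryGroup a ℂ)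
    (hG : G ∈ unitaryGroup a ℂ) {c : ℝ} (hc₀ : 0 < c)
    (hc : ∀ x y, Complex.normSq ((Fᴴ * G) x y) ≤ c) {ρ : Matrix (a × b × e) (a × b × e) ℂ}
    (hρ : IsDensity ρ) :
    traceNorm (rAE ρ - rA ρ ⊗ₖ rE ρ) ≤
      2 * √(condEntropy (dephaseIn F (rAB ρ)) + condEntropy (dephaseIn G (rAB ρ)) +
        (vN (rA ρ) + Real.logb 2 c)) := by
  have hpinsker : traceNorm (rAE ρ - rA ρ ⊗ₖ rE ρ) ^ 2 ≤
      4 * (vN (rA ρ) - condEntropy (rAE ρ)) := by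
    rw [← r2A_rAE]
    exact traceNorm_sub_r2A_kronecker_r2B_sq_le hρ.rAE
  have hssa := condEntropy_rAB_add_condEntropy_rAE_nonneg hρ.1
  have huncertainty := condEntropy_sub_logb_le_condEntropy_dephaseIn hF hG hc₀ hc hρ.rAB
  rw [← div_le_iff₀' two_pos]
  apply Real.le_sqrt_of_sq_le
  rw [div_pow]
  linarith

/-- decoupling theorem. If S(ρ^A) ≤ log₂ d, S(Z^A|B)_ρ ≤ ε₁ and
S(X^A|B)_ρ ≤ ε₂, then Tr|ρ^{AE} − ρ^A ⊗ ρ^E| ≤ 2√(ε₁+ε₂). -/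
theorem decoupling (d : ℕ) [NeZero d]
    {b e : Type*} [Fintype b] [DecidableEq b] [Fintype e] [DecidableEq e]
    (ρ : Matrix (Fin d × b × e) (Fin d × b × e) ℂ) (hρ : IsDensity ρ)
    (ε₁ ε₂ : ℝ)
    (hA : vN (rA ρ) ≤ Real.logb 2 d)
    (hZ : vN (dephaseA (rAB ρ)) - vN (rB ρ) ≤ ε₁)
    (hX : vN (dephaseXA d (rAB ρ)) - vN (rB ρ) ≤ ε₂) :
    traceNorm (rAE ρ - rA ρ ⊗ₖ rE ρ) ≤ 2 * Real.sqrt (ε₁ + ε₂) := by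
  have hd : (0 : ℝ) < 1 / d := one_div_pos.2 (Nat.cast_pos.2 (NeZero.pos d))
  have h := decoupling_general (one_mem _) (fourierMat_mem_unitaryGroup d) hd
    (fun x y => by rw [conjTranspose_one, Matrix.one_mul, normSq_fourierMat_apply]) hρ
  rw [condEntropy_dephaseIn_one, condEntropy_dephaseIn_fourierMat, one_div, Real.logb_inv,
    show r2B (rAB ρ) = rB ρ from rfl] at h
  exact h.trans (mul_le_mul_of_nonneg_left (Real.sqrt_le_sqrt (by linarith)) zero_le_two)
end
end
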